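/- arXiv:2003.14302 — 10 statements merged into one kernel-verified Lean document; each statement's English description precedes it below -/
import Mathlib

section
/- Let V be a real vector space, K ⊆ V a convex set, C ⊆ K a convex subset, and E ⊆ K an extreme subset of K. If the relative algebraic interior ri(C) intersects E, i.e. ri(C) ∩ E ≠ ∅, then C ⊆ E. -/
variable {V : Type*} [AddCommGroup V] [Module ℝ V]

/-- `E` is an extreme subset of `K`: whenever a point of `E` is written as
`(1-l)•y + l•z` with `y, z ∈ K` and `l ∈ (0,1)`, both `y` and `z` lie in `E`. -/
def IsExtremeSubset (K E : Set V) : Prop :=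
  E ⊆ K ∧ ∀ x ∈ E, ∀ y ∈ K, ∀ z ∈ K, ∀ l : ℝ, l ∈ Set.Ioo (0:ℝ) 1 →
    x = (1 - l) • y + l • z → y ∈ E ∧ z ∈ E

/-- `F` is a face of `K`: a convex extreme subset of `K`. -/
def IsFaceOf (K F : Set V) : Prop := Convex ℝ F ∧ IsExtremeSubset K F

/-- The face of `K` generated by `x`: the smallest face of `K` containing `x`
(the intersection of all faces of `K` containing `x`). -/
def genFace (K : Set V) (x : V) : Set V := ⋂₀ {F | IsFaceOf K F ∧ x ∈ F}

/-- The relative algebraic interior of `C`: all `x ∈ C` such that for every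
`y` in the affine hull of `C` there is `ε > 0` with `x ± ε(y - x) ∈ C`. -/
def riSet (C : Set V) : Set V :=
  {x | x ∈ C ∧ ∀ y ∈ affineSpan ℝ C, ∃ ε : ℝ, 0 < ε ∧
    x + ε • (y - x) ∈ C ∧ x - ε • (y - x) ∈ C}

theorem stmt0 (K C E : Set V) (hK : Convex ℝ K) (hC : C ⊆ K) (hCconv : Convex ℝ C)
    (hE : IsExtremeSubset K E) (hne : (riSet C ∩ E).Nonempty) :
    C ⊆ E := by
  obtain ⟨x, ⟨_, hx⟩, hxE⟩ := hne
  intro y hy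
  obtain ⟨ε, hε, -, hz⟩ := hx y (subset_affineSpan ℝ C hy)
  have h1 : (0:ℝ) < 1 + ε := by linarith
  refine (hE.2 x hxE y (hC hy) _ (hC hz) (1 / (1 + ε)) ⟨by positivity, ?_⟩ ?_).1
  · rw [div_lt_one h1]; linarith
  · match_scalars <;> field_simp <;> ring
end

section
/- Let V be a real vector space, K ⊆ V a convex set, and x ∈ K. Then the affine hull of the face of K generated by x satisfies aff(F_K(x)) = {y ∈ V : ∃ ε > 0 such that x + ε(y − x) ∈ F_K(x) and x − ε(y − x) ∈ F_K(x)} = {y ∈ V : ∃ ε > 0 such that x + ε(y − x) ∈ K and x − ε(y − x) ∈ K}. In particular, x lies in the relative algebraic interior ri(F_K(x)); thus the face generated by any point of an arbitrary convex set has a nonempty relative algebraic interior. -/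
variable {V : Type*} [AddCommGroup V] [Module ℝ V]

theorem shrink_mem {K : Set V} (hK : Convex ℝ K) {x v : V} (hx : x ∈ K) {a b : ℝ}
    (ha : x + a • v ∈ K) (hb : 0 < b) (hba : b ≤ a) : x + b • v ∈ K := by
  have ha0 : 0 < a := lt_of_lt_of_le hb hba
  have h := hK hx ha (a := 1 - b / a) (b := b / a)
    (by rw [sub_nonneg, div_le_one ha0]; exact hba) (by positivity) (by ring)
  convert h using 1
  match_scalars <;> field_simp
  ring

theorem back_mem {K : Set V} (hK : Convex ℝ K) {x y z : V} {a b d : ℝ}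
    (hz : z ∈ K) (ha : 0 < a) (hb : 0 < b) (hab : a + b = 1) (hd : 0 < d)
    (hq : x + d • (x - (a • y + b • z)) ∈ K) :
    ∃ e : ℝ, 0 < e ∧ x + e • (x - y) ∈ K := by
  refine ⟨d * a / (1 + d * b), by positivity, ?_⟩
  have h := hK hq hz (a := 1 / (1 + d * b)) (b := d * b / (1 + d * b))
    (by positivity) (by positivity) (by field_simp)
  convert h using 1
  have hne : 1 + d * b ≠ 0 := by positivity
  obtain rfl : a = 1 - b := by linarith
  match_scalars <;> field_simp <;> ring

theorem isFace_back {K : Set V} (hK : Convex ℝ K) {x : V} (hx : x ∈ K) :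
    IsFaceOf K {y | y ∈ K ∧ ∃ d : ℝ, 0 < d ∧ x + d • (x - y) ∈ K} := by
  refine ⟨?_, fun y hy => hy.1, ?_⟩
  · rintro y ⟨hy, d, hd, hyd⟩ z ⟨hz, e, he, hze⟩ a b ha hb hab
    refine ⟨hK hy hz ha hb hab, min d e, lt_min hd he, ?_⟩
    have h1 := shrink_mem hK hx hyd (lt_min hd he) (min_le_left d e)
    have h2 := shrink_mem hK hx hze (lt_min hd he) (min_le_right d e)
    convert hK h1 h2 ha hb hab using 1
    obtain rfl : a = 1 - b := by linarith
    match_scalars <;> ring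
  · rintro p ⟨hp, d, hd, hq⟩ y hy z hz l ⟨hl0, hl1⟩ rfl
    refine ⟨⟨hy, ?_⟩, ⟨hz, ?_⟩⟩
    · exact back_mem hK hz (a := 1 - l) (b := l) (by linarith) hl0 (by ring) hd hq
    · rw [add_comm ((1 - l) • y)] at hq
      exact back_mem hK hy (a := l) (b := 1 - l) hl0 (by linarith) (by ring) hd hq

/-- The space of directions in which one can move both ways from `x` inside `K`. -/
def dirSub (K : Set V) (hK : Convex ℝ K) (x : V) (hx : x ∈ K) : Submodule ℝ V where
  carrier := {v | ∃ e : ℝ, 0 < e ∧ x + e • v ∈ K ∧ x + e • (-v) ∈ K}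
  zero_mem' := ⟨1, one_pos, by simpa using hx, by simpa using hx⟩
  add_mem' := by
    rintro v w ⟨d, hd, h1, h2⟩ ⟨e, he, h3, h4⟩
    have hm : 0 < min d e := lt_min hd he
    refine ⟨min d e / 2, by positivity, ?_, ?_⟩
    · convert hK (shrink_mem hK hx h1 hm (min_le_left d e))
        (shrink_mem hK hx h3 hm (min_le_right d e))
        (a := 1 / 2) (b := 1 / 2) (by norm_num) (by norm_num) (by norm_num) using 1
      match_scalars <;> ring
    · convert hK (shrink_mem hK hx h2 hm (min_le_left d e))
        (shrink_mem hK hx h4 hm (min_le_right d e))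
        (a := 1 / 2) (b := 1 / 2) (by norm_num) (by norm_num) (by norm_num) using 1
      match_scalars <;> ring
  smul_mem' := by
    rintro c v ⟨e, he, h1, h2⟩
    rcases lt_trichotomy c 0 with hc | rfl | hc
    · have hc' : c ≠ 0 := hc.ne
      refine ⟨e / (-c), div_pos he (by linarith), ?_, ?_⟩
      · convert h2 using 2
        match_scalars
        field_simp
      · convert h1 using 2
        match_scalars
        field_simp
    · exact ⟨1, one_pos, by simpa using hx, by simpa using hx⟩
    · refine ⟨e / c, by positivity, ?_, ?_⟩
      · convert h1 using 2
        match_scalars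
        field_simp
      · convert h2 using 2
        match_scalars
        field_simp

theorem stmt3 (K : Set V) (hK : Convex ℝ K) (x : V) (hx : x ∈ K) :
    (affineSpan ℝ (genFace K x) : Set V) =
      {y : V | ∃ ε : ℝ, 0 < ε ∧
        x + ε • (y - x) ∈ genFace K x ∧ x - ε • (y - x) ∈ genFace K x} ∧
    (affineSpan ℝ (genFace K x) : Set V) =
      {y : V | ∃ ε : ℝ, 0 < ε ∧ x + ε • (y - x) ∈ K ∧ x - ε • (y - x) ∈ K} ∧
    x ∈ riSet (genFace K x) := by
  have hxF : x ∈ genFace K x := fun F hF => hF.2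
  have hAB : ∀ y : V, ∀ ε : ℝ, x + ε • (y - x) ∈ K → x - ε • (y - x) ∈ K →
      x + ε • (y - x) ∈ genFace K x ∧ x - ε • (y - x) ∈ genFace K x := by
    intro y ε h1 h2
    have key : ∀ F, IsFaceOf K F ∧ x ∈ F → x + ε • (y - x) ∈ F ∧ x - ε • (y - x) ∈ F := by
      intro F hF
      refine hF.1.2.2 x hF.2 _ h1 _ h2 (1 / 2) ⟨by norm_num, by norm_num⟩ ?_
      match_scalars <;> ring
    exact ⟨fun F hF => (key F hF).1, fun F hF => (key F hF).2⟩
  have hFK : genFace K x ⊆ K := by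
    intro y hy
    exact (hy _ ⟨isFace_back hK hx, hx, 1, one_pos, by simpa using hx⟩).1
  have hsub : ∀ y ∈ affineSpan ℝ (genFace K x),
      ∃ ε : ℝ, 0 < ε ∧ x + ε • (y - x) ∈ K ∧ x - ε • (y - x) ∈ K := by
    have hle : affineSpan ℝ (genFace K x) ≤ AffineSubspace.mk' x (dirSub K hK x hx) := by
      rw [affineSpan_le]
      intro y hy
      obtain ⟨hyK, d, hd, hyd⟩ :=
        hy _ ⟨isFace_back hK hx, hx, 1, one_pos, by simpa using hx⟩
      have hm : 0 < min 1 d := lt_min one_pos hd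
      rw [SetLike.mem_coe, AffineSubspace.mem_mk', vsub_eq_sub]
      refine ⟨min 1 d, hm, ?_, ?_⟩
      · exact shrink_mem hK hx (a := 1) (by simpa using hyK) hm (min_le_left _ _)
      · rw [neg_sub]
        exact shrink_mem hK hx hyd hm (min_le_right _ _)
    intro y hy
    have h := hle hy
    rw [AffineSubspace.mem_mk', vsub_eq_sub] at h
    obtain ⟨e, he, h1, h2⟩ := h
    exact ⟨e, he, h1, by rwa [smul_neg, ← sub_eq_add_neg] at h2⟩
  have hBaff : ∀ y : V, ∀ ε : ℝ, 0 < ε → x + ε • (y - x) ∈ genFace K x →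
      y ∈ affineSpan ℝ (genFace K x) := by
    intro y ε hε h
    have h3 := AffineMap.lineMap_mem (Q := affineSpan ℝ (genFace K x)) (1 / ε)
      (subset_affineSpan ℝ _ hxF) (subset_affineSpan ℝ _ h)
    convert h3 using 1
    rw [AffineMap.lineMap_apply_module]
    match_scalars <;> field_simp
    ring
  refine ⟨?_, ?_, hxF, ?_⟩
  · ext y
    constructor
    · intro hy
      obtain ⟨e, he, h1, h2⟩ := hsub y hy
      exact ⟨e, he, hAB y e h1 h2⟩
    · rintro ⟨e, he, h1, h2⟩
      exact hBaff y e he h1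
  · ext y
    constructor
    · exact hsub y
    · rintro ⟨e, he, h1, h2⟩
      exact hBaff y e he (hAB y e h1 h2).1
  · intro y hy
    obtain ⟨e, he, h1, h2⟩ := hsub y hy
    exact ⟨e, he, hAB y e h1 h2⟩
end

section
/- Let V be a real vector space, K ⊆ V a convex set, and x ∈ K. Then F_K(x) = ⋃ [y, z], where the union is over all pairs y, z ∈ K such that x lies in the open segment (y, z) (with the convention [x, x] = (x, x) = {x}, so x itself is included). -/
variable {V : Type*} [AddCommGroup V] [Module ℝ V]

/-- Points `w` of `K` such that the segment from `w` to `x` extends beyond `x` in `K`. -/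
def extSet (K : Set V) (x : V) : Set V :=
  {w | w ∈ K ∧ ∃ e : ℝ, 0 < e ∧ x + e • (x - w) ∈ K}

theorem extSet_shrink {K : Set V} (hK : Convex ℝ K) {x w : V} (hx : x ∈ K) {e f : ℝ}
    (hf : 0 < f) (hfe : f ≤ e) (h : x + e • (x - w) ∈ K) : x + f • (x - w) ∈ K := by
  have he : 0 < e := hf.trans_le hfe
  have h1 : f / e ≤ 1 := (div_le_one he).2 hfe
  have := hK hx h (sub_nonneg.2 h1) (by positivity : 0 ≤ f / e) (by ring)
  convert this using 1
  match_scalars <;> field_simp <;> ring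

theorem extSet_left {K : Set V} (hK : Convex ℝ K) {x y z : V} {e l : ℝ} (he : 0 < e)
    (hl : 0 < l) (hl1 : l < 1) (hy : y ∈ K) (hz : z ∈ K)
    (h : x + e • (x - ((1 - l) • y + l • z)) ∈ K) : y ∈ extSet K x := by
  have hp : 0 < 1 + e * l := by positivity
  have h1 : 0 < 1 - l := by linarith
  refine ⟨hy, e * (1 - l) / (1 + e * l), by positivity, ?_⟩
  have := hK h hz (by positivity : 0 ≤ 1 / (1 + e * l))
    (by positivity : 0 ≤ e * l / (1 + e * l)) (by field_simp)
  convert this using 1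
  match_scalars <;> field_simp <;> ring

theorem extSet_face {K : Set V} (hK : Convex ℝ K) {x : V} (hx : x ∈ K) :
    IsFaceOf K (extSet K x) := by
  refine ⟨?_, fun w h => h.1, ?_⟩
  · rintro w₁ ⟨h₁, e₁, he₁, k₁⟩ w₂ ⟨h₂, e₂, he₂, k₂⟩ a b ha hb hab
    refine ⟨hK h₁ h₂ ha hb hab, min e₁ e₂, lt_min he₁ he₂, ?_⟩
    have m₁ := extSet_shrink hK hx (lt_min he₁ he₂) (min_le_left _ _) k₁
    have m₂ := extSet_shrink hK hx (lt_min he₁ he₂) (min_le_right _ _) k₂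
    have := hK m₁ m₂ ha hb hab
    convert this using 1
    obtain rfl : b = 1 - a := by linarith
    module
  · rintro w ⟨hw, e, he, k⟩ y hy z hz l ⟨hl, hl1⟩ rfl
    refine ⟨extSet_left hK he hl hl1 hy hz k,
      extSet_left hK (l := 1 - l) he (by linarith) (by linarith) hz hy ?_⟩
    convert k using 1
    module

theorem stmt4 (K : Set V) (hK : Convex ℝ K) (x : V) (hx : x ∈ K) :
    genFace K x =
      {w : V | ∃ y ∈ K, ∃ z ∈ K, x ∈ openSegment ℝ y z ∧ w ∈ segment ℝ y z} := by
  apply Set.Subset.antisymm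
  · intro w hw
    obtain ⟨hwK, e, he, k⟩ := hw (extSet K x)
      ⟨extSet_face hK hx, hx, 1, one_pos, by simpa using hx⟩
    refine ⟨w, hwK, _, k, ⟨e / (1 + e), 1 / (1 + e), by positivity, by positivity,
      by field_simp; ring, ?_⟩, left_mem_segment ℝ _ _⟩
    match_scalars <;> field_simp <;> ring
  · rintro w ⟨y, hy, z, hz, ⟨a, b, ha, hb, hab, hxe⟩, hw⟩ F ⟨⟨hF, -, hE⟩, hxF⟩
    obtain ⟨h1, h2⟩ := hE x hxF y hy z hz b ⟨hb, by linarith⟩ (by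
      rw [← hxe, ← hab, add_sub_cancel_right])
    exact hF.segment_subset h1 h2 hw
end

section
/- Let V be a real vector space and K ⊆ V a convex set. The family of relative algebraic interiors of faces of K is a partition of K: every point of K lies in the relative algebraic interior of some face of K, and if two faces F, G of K satisfy ri(F) ∩ ri(G) ≠ ∅, then F = G (in particular the nonempty sets among the ri(F) are pairwise disjoint and cover K). -/
variable {V : Type*} [AddCommGroup V] [Module ℝ V]

theorem aux_shrink {K : Set V} (hK : Convex ℝ K) {x d : V} (hx : x ∈ K) {e r : ℝ}
    (he : 0 < e) (hr : 0 ≤ r) (hre : r ≤ e) (h : x + e • d ∈ K) : x + r • d ∈ K := by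
  have h1 : r / e ≤ 1 := by rw [div_le_one he]; exact hre
  have := hK hx h (a := 1 - r / e) (b := r / e) (by linarith) (by positivity) (by ring)
  convert this using 1
  have h2 : r / e * e = r := by field_simp
  rw [smul_add, smul_smul, h2]
  module

/-- Directions in which `x` can be moved both ways inside `K`. -/
def auxDir (K : Set V) (hK : Convex ℝ K) (x : V) (hx : x ∈ K) : Submodule ℝ V where
  carrier := {d | ∃ e : ℝ, 0 < e ∧ x + e • d ∈ K ∧ x + e • (-d) ∈ K}
  zero_mem' := ⟨1, one_pos, by simpa using hx, by simpa using hx⟩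
  add_mem' := by
    rintro a b ⟨e, he, h1, h2⟩ ⟨f, hf, h3, h4⟩
    have hm : 0 < min e f := lt_min he hf
    have k1 := aux_shrink hK hx he hm.le (min_le_left _ _) h1
    have k2 := aux_shrink hK hx he hm.le (min_le_left _ _) h2
    have k3 := aux_shrink hK hx hf hm.le (min_le_right _ _) h3
    have k4 := aux_shrink hK hx hf hm.le (min_le_right _ _) h4
    refine ⟨min e f / 2, by positivity, ?_, ?_⟩
    · convert hK k1 k3 (a := 1/2) (b := 1/2) (by norm_num) (by norm_num) (by norm_num) using 1
      module
    · convert hK k2 k4 (a := 1/2) (b := 1/2) (by norm_num) (by norm_num) (by norm_num) using 1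
      module
  smul_mem' := by
    rintro c a ⟨e, he, h1, h2⟩
    rcases lt_trichotomy c 0 with hc | hc | hc
    · have h0 : e / (-c) * c = -e := by
        have := hc.ne
        field_simp
      refine ⟨e / (-c), div_pos he (by linarith), ?_, ?_⟩
      · rw [smul_smul, h0]; simpa using h2
      · rw [smul_neg, smul_smul, h0]; simpa using h1
    · subst hc
      exact ⟨1, one_pos, by simpa using hx, by simpa using hx⟩
    · have h0 : e / c * c = e := by field_simp
      refine ⟨e / c, div_pos he hc, ?_, ?_⟩
      · rw [smul_smul, h0]; exact h1
      · rw [smul_neg, smul_smul, h0]; simpa using h2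

def auxFace (K : Set V) (x : V) : Set V :=
  {y | y ∈ K ∧ ∃ e : ℝ, 0 < e ∧ x + e • (x - y) ∈ K}

theorem aux_ext {K : Set V} (hK : Convex ℝ K) {x y z : V} {l : ℝ} (hl : l ∈ Set.Ioo (0:ℝ) 1)
    (hy : y ∈ K) (hz : z ∈ K) (hu : (1 - l) • y + l • z ∈ auxFace K x) :
    y ∈ auxFace K x := by
  obtain ⟨-, e, he, h⟩ := hu
  obtain ⟨l0, l1⟩ := hl
  have hp : 0 < 1 + e * l := by positivity
  have h1 : 0 < 1 - l := by linarith
  refine ⟨hy, e * (1 - l) / (1 + e * l), by positivity, ?_⟩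
  convert hK h hz (a := 1 / (1 + e * l)) (b := e * l / (1 + e * l)) (by positivity)
    (by positivity) (by field_simp) using 1
  match_scalars <;> field_simp <;> ring

theorem aux_face {K : Set V} (hK : Convex ℝ K) {x : V} (hx : x ∈ K) :
    IsFaceOf K (auxFace K x) := by
  refine ⟨?_, fun y hy => hy.1, ?_⟩
  · rintro y ⟨hy, e, he, h1⟩ z ⟨hz, f, hf, h2⟩ a b ha hb hab
    have hm : 0 < min e f := lt_min he hf
    have k1 := aux_shrink hK hx he hm.le (min_le_left _ _) h1
    have k2 := aux_shrink hK hx hf hm.le (min_le_right _ _) h2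
    refine ⟨hK hy hz ha hb hab, min e f, hm, ?_⟩
    convert hK k1 k2 ha hb hab using 1
    obtain rfl : a = 1 - b := by linarith
    module
  · intro u hu y hy z hz l hl hul
    subst hul
    refine ⟨aux_ext hK hl hy hz hu, aux_ext hK (l := 1 - l) (z := y) ?_ hz hy ?_⟩
    · exact ⟨by linarith [hl.2], by linarith [hl.1]⟩
    · convert hu using 1
      module

theorem aux_ri {K : Set V} (hK : Convex ℝ K) {x : V} (hx : x ∈ K) :
    x ∈ riSet (auxFace K x) := by
  refine ⟨⟨hx, 1, one_pos, by simpa using hx⟩, fun y hy => ?_⟩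
  have hle : affineSpan ℝ (auxFace K x) ≤ AffineSubspace.mk' x (auxDir K hK x hx) := by
    rw [affineSpan_le]
    rintro z ⟨hz, e, he, h⟩
    rw [SetLike.mem_coe, AffineSubspace.mem_mk']
    have hm : 0 < min e 1 := lt_min he one_pos
    refine ⟨min e 1, hm, ?_, ?_⟩
    · exact aux_shrink hK hx one_pos hm.le (min_le_right _ _) (by simpa using hz)
    · exact aux_shrink hK hx he hm.le (min_le_left _ _) (by simpa using h)
  have := hle hy
  rw [AffineSubspace.mem_mk'] at this
  obtain ⟨e, he, h1, h2⟩ := this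
  rw [vsub_eq_sub] at h1 h2
  have h2' : x - e • (y - x) ∈ K := by
    convert h2 using 1
    module
  refine ⟨e, he, ⟨h1, 1, one_pos, ?_⟩, ⟨h2', 1, one_pos, ?_⟩⟩
  · convert h2 using 1
    module
  · convert h1 using 1
    module

theorem aux_sub {K F G : Set V} (hF : IsFaceOf K F) (hG : IsFaceOf K G) {x : V}
    (hxF : x ∈ riSet F) (hxG : x ∈ G) : F ⊆ G := by
  intro y hy
  obtain ⟨e, he, -, h⟩ := hxF.2 y (subset_affineSpan ℝ F hy)
  refine (hG.2.2 x hxG _ (hF.2.1 h) y (hF.2.1 hy) (e / (1 + e)) ⟨by positivity, ?_⟩ ?_).2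
  · rw [div_lt_one (by positivity)]; linarith
  · match_scalars <;> field_simp <;> ring

theorem stmt6 (K : Set V) (hK : Convex ℝ K) :
    (∀ x ∈ K, ∃ F : Set V, IsFaceOf K F ∧ x ∈ riSet F) ∧
    (∀ F G : Set V, IsFaceOf K F → IsFaceOf K G →
      (riSet F ∩ riSet G).Nonempty → F = G) := by
  refine ⟨fun x hx => ⟨auxFace K x, aux_face hK hx, aux_ri hK hx⟩, ?_⟩
  rintro F G hF hG ⟨x, hxF, hxG⟩
  exact Set.Subset.antisymm (aux_sub hF hG hxF hxG.1) (aux_sub hG hF hxG hxF.1)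
end

section
/- Let V be a real vector space, K ⊆ V a convex set, F a face of K, and x ∈ K. Then x ∈ ri(F) if and only if F = F_K(x). In particular, for points x, y ∈ K one has x ∈ ri(F_K(y)) if and only if F_K(y) = F_K(x). -/
variable {V : Type*} [AddCommGroup V] [Module ℝ V]

/-- explicit description of the generated face -/
def gset (K : Set V) (x : V) : Set V := {y | y ∈ K ∧ ∃ ε : ℝ, 0 < ε ∧ x - ε • (y - x) ∈ K}

theorem shrink {K : Set V} (hK : Convex ℝ K) {x v : V} (hx : x ∈ K) {e d : ℝ}
    (hd : 0 ≤ d) (hde : d ≤ e) (he : 0 < e) (h : x + e • v ∈ K) : x + d • v ∈ K := by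
  have h1 : d / e ≤ 1 := (div_le_one he).2 hde
  have := hK hx h (sub_nonneg.2 h1) (div_nonneg hd he.le) (by ring)
  convert this using 1
  match_scalars <;> field_simp <;> ring

theorem gset_face {K : Set V} (hK : Convex ℝ K) {x : V} (hx : x ∈ K) :
    IsFaceOf K (gset K x) := by
  refine ⟨?_, fun y hy => hy.1, ?_⟩
  · rintro y ⟨hy, e, he, hye⟩ z ⟨hz, d, hd, hzd⟩ a b ha hb hab
    refine ⟨hK hy hz ha hb hab, min e d, lt_min he hd, ?_⟩
    have hm : 0 < min e d := lt_min he hd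
    have h1 : x + (min e d) • (x - y) ∈ K :=
      shrink hK hx hm.le (min_le_left _ _) he (by convert hye using 1; module)
    have h2 : x + (min e d) • (x - z) ∈ K :=
      shrink hK hx hm.le (min_le_right _ _) hd (by convert hzd using 1; module)
    have := hK h1 h2 ha hb hab
    convert this using 1
    obtain rfl : b = 1 - a := by linarith
    module
  · have key : ∀ w ∈ gset K x, ∀ y ∈ K, ∀ z ∈ K, ∀ l : ℝ, l ∈ Set.Ioo (0:ℝ) 1 →
        w = (1 - l) • y + l • z → y ∈ gset K x := by
      rintro w ⟨hw, e, he, hwe⟩ y hy z hz l ⟨hl0, hl1⟩ rfl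
      have hp : 0 < 1 + e * l := by positivity
      have h1l : 0 < 1 - l := by linarith
      refine ⟨hy, e * (1 - l) / (1 + e * l), by positivity, ?_⟩
      have := hK hwe hz (a := 1 / (1 + e * l)) (b := e * l / (1 + e * l))
        (by positivity) (by positivity) (by field_simp)
      convert this using 1
      match_scalars <;> field_simp <;> ring
    intro w hw y hy z hz l hl h
    refine ⟨key w hw y hy z hz l hl h, key w hw z hz y hy (1 - l) ⟨?_, ?_⟩ ?_⟩
    · linarith [hl.2]
    · linarith [hl.1]
    · rw [h]; module

theorem mem_gset_self {K : Set V} {x : V} (hx : x ∈ K) : x ∈ gset K x :=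
  ⟨hx, 1, one_pos, by simpa using hx⟩

theorem genFace_eq {K : Set V} (hK : Convex ℝ K) {x : V} (hx : x ∈ K) :
    genFace K x = gset K x := by
  apply Set.Subset.antisymm
  · exact Set.sInter_subset_of_mem ⟨gset_face hK hx, mem_gset_self hx⟩
  · rintro y ⟨hy, e, he, h⟩ F ⟨hF, hxF⟩
    have hp : 0 < 1 + e := by positivity
    refine (hF.2.2 x hxF y hy _ h (1 / (1 + e)) ⟨by positivity, ?_⟩ ?_).1
    · rw [div_lt_one hp]; linarith
    · match_scalars <;> field_simp <;> ring

/-- directions in which one can move both ways -/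
def dirs (K : Set V) (hK : Convex ℝ K) (x : V) (hx : x ∈ K) : Submodule ℝ V where
  carrier := {v | ∃ e : ℝ, 0 < e ∧ ∀ t : ℝ, |t| ≤ e → x + t • v ∈ K}
  zero_mem' := ⟨1, one_pos, fun t _ => by simpa using hx⟩
  add_mem' := by
    rintro v w ⟨e, he, hv⟩ ⟨d, hd, hw⟩
    refine ⟨min e d / 2, by have := lt_min he hd; positivity, fun t ht => ?_⟩
    have h2 : |2 * t| ≤ min e d := by rw [abs_mul, abs_two]; linarith
    have := hK (hv (2 * t) (h2.trans (min_le_left _ _))) (hw (2 * t) (h2.trans (min_le_right _ _)))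
      (a := 1 / 2) (b := 1 / 2) (by norm_num) (by norm_num) (by norm_num)
    convert this using 1
    module
  smul_mem' := by
    rintro c v ⟨e, he, hv⟩
    have hc : 0 < |c| + 1 := by positivity
    refine ⟨e / (|c| + 1), by positivity, fun t ht => ?_⟩
    rw [smul_smul]
    apply hv
    rw [abs_mul]
    rw [le_div_iff₀ hc] at ht
    nlinarith [abs_nonneg t]

theorem mem_ri_gset {K : Set V} (hK : Convex ℝ K) {x : V} (hx : x ∈ K) :
    x ∈ riSet (gset K x) := by
  refine ⟨mem_gset_self hx, fun y hy => ?_⟩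
  have hle : affineSpan ℝ (gset K x) ≤ AffineSubspace.mk' x (dirs K hK x hx) := by
    rw [affineSpan_le]
    rintro z ⟨hz, e, he, hze⟩
    rw [SetLike.mem_coe, AffineSubspace.mem_mk', vsub_eq_sub]
    refine ⟨min 1 e, lt_min one_pos he, fun t ht => ?_⟩
    rcases le_total 0 t with h0 | h0
    · rw [abs_of_nonneg h0] at ht
      exact shrink hK hx h0 (ht.trans (min_le_left _ _)) one_pos (by simpa using hz)
    · rw [abs_of_nonpos h0] at ht
      have := shrink hK hx (v := x - z) (neg_nonneg.2 h0) (ht.trans (min_le_right _ _)) he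
        (by convert hze using 1; module)
      convert this using 1
      module
  have hy' := hle hy
  rw [AffineSubspace.mem_mk', vsub_eq_sub] at hy'
  obtain ⟨e, he, h⟩ := hy'
  have h1 := h e (by rw [abs_of_pos he])
  have h2 : x - e • (y - x) ∈ K := by
    convert h (-e) (by rw [abs_neg, abs_of_pos he]) using 1
    module
  refine ⟨e, he, ⟨h1, 1, one_pos, ?_⟩, ⟨h2, 1, one_pos, ?_⟩⟩
  · convert h2 using 1; module
  · convert h1 using 1; module

theorem ri_iff {K F : Set V} (hK : Convex ℝ K) (hF : IsFaceOf K F)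
    {x : V} (hx : x ∈ K) : x ∈ riSet F ↔ F = genFace K x := by
  constructor
  · rintro ⟨hxF, h⟩
    apply Set.Subset.antisymm
    · rw [genFace_eq hK hx]
      intro y hy
      obtain ⟨e, he, -, h2⟩ := h y (subset_affineSpan ℝ F hy)
      exact ⟨hF.2.1 hy, e, he, hF.2.1 h2⟩
    · exact Set.sInter_subset_of_mem ⟨hF, hxF⟩
  · rintro rfl
    rw [genFace_eq hK hx]
    exact mem_ri_gset hK hx

theorem stmt7 (K F : Set V) (hK : Convex ℝ K) (hF : IsFaceOf K F)
    (x : V) (hx : x ∈ K) :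
    (x ∈ riSet F ↔ F = genFace K x) ∧
    (∀ y ∈ K, (x ∈ riSet (genFace K y) ↔ genFace K y = genFace K x)) := by
  refine ⟨ri_iff hK hF hx, fun y hy => ri_iff hK ?_ hx⟩
  rw [genFace_eq hK hy]
  exact gset_face hK hy
end

section
/- Let V be a real vector space, K ⊆ V a convex set, ℓ ∈ ℕ, u = {1, …, ℓ}, and for each k ∈ u let f_k : K → ℝ ∪ {+∞} be a generalized affine map and α_k ∈ ℝ. Let s ⊆ u and let K_u^s = {x ∈ K : f_k(x) ≤ α_k for all k ∈ u \ s, and f_k(x) = α_k for all k ∈ s}, and let x ∈ K_u^s. If the face F_{K_u^s}(x) of K_u^s generated by x has finite dimension m ∈ ℕ, then the dimension of the face F_K(x) of K generated by x belongs to {m, m+1, …, m+ℓ}. -/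
variable {V : Type*} [AddCommGroup V] [Module ℝ V]

/-- A generalized affine map on `K` with values in `ℝ ∪ {+∞}` (modelled by
`EReal` values that are never `⊥` on `K`), affine with the extended arithmetic
`0·(+∞) = 0`, `λ·(+∞) = +∞` for `λ > 0`, `α + (+∞) = +∞`. -/
def IsGenAffine (K : Set V) (f : V → EReal) : Prop :=
  (∀ x ∈ K, f x ≠ ⊥) ∧
  ∀ x ∈ K, ∀ y ∈ K, ∀ l : ℝ, l ∈ Set.Icc (0:ℝ) 1 →
    f ((1 - l) • x + l • y) = ((1 - l : ℝ) : EReal) * f x + ((l : ℝ) : EReal) * f y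

lemma dir_mono {K : Set V} (hK : Convex ℝ K) {x v : V} (hx : x ∈ K) {ε δ : ℝ} (hδ : 0 ≤ δ)
    (hε : 0 < ε) (h : δ ≤ ε) (h1 : x + ε • v ∈ K) : x + δ • v ∈ K := by
  have := hK hx h1 (a := 1 - δ / ε) (b := δ / ε)
    (by rw [sub_nonneg, div_le_one hε]; exact h) (by positivity) (by ring)
  convert this using 1
  match_scalars <;> field_simp <;> ring

/-- The subspace of directions in which one can move both ways from `x` inside `K`. -/
def dirSpace (K : Set V) (hK : Convex ℝ K) (x : V) (hx : x ∈ K) : Submodule ℝ V where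
  carrier := {v | ∃ ε : ℝ, 0 < ε ∧ x + ε • v ∈ K ∧ x + ε • (-v) ∈ K}
  zero_mem' := ⟨1, one_pos, by simpa using hx, by simpa using hx⟩
  add_mem' := by
    rintro v w ⟨ε, hε, h1, h2⟩ ⟨δ, hδ, h3, h4⟩
    have hm : 0 < min ε δ := lt_min hε hδ
    have a1 := dir_mono hK hx hm.le hε (min_le_left ε δ) h1
    have a2 := dir_mono hK hx hm.le hε (min_le_left ε δ) h2
    have a3 := dir_mono hK hx hm.le hδ (min_le_right ε δ) h3
    have a4 := dir_mono hK hx hm.le hδ (min_le_right ε δ) h4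
    refine ⟨min ε δ / 2, by positivity, ?_, ?_⟩
    · convert hK a1 a3 (a := 1/2) (b := 1/2) (by norm_num) (by norm_num) (by norm_num) using 1
      module
    · convert hK a2 a4 (a := 1/2) (b := 1/2) (by norm_num) (by norm_num) (by norm_num) using 1
      module
  smul_mem' := by
    rintro c v ⟨ε, hε, h1, h2⟩
    rcases lt_trichotomy c 0 with hc | hc | hc
    · refine ⟨ε / (-c), div_pos hε (by linarith), ?_, ?_⟩
      · convert h2 using 2
        match_scalars; field_simp; rw [div_self hc.ne]
      · convert h1 using 2
        match_scalars; field_simp; rw [div_self hc.ne]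
    · subst hc
      exact ⟨1, one_pos, by simpa using hx, by simpa using hx⟩
    · refine ⟨ε / c, by positivity, ?_, ?_⟩
      · convert h1 using 2
        match_scalars; field_simp
      · convert h2 using 2
        match_scalars; field_simp

lemma mem_dirSpace {K : Set V} (hK : Convex ℝ K) {x : V} (hx : x ∈ K) {v : V} :
    v ∈ dirSpace K hK x hx ↔ ∃ ε : ℝ, 0 < ε ∧ x + ε • v ∈ K ∧ x + ε • (-v) ∈ K := Iff.rfl

lemma mem_dir_of {K : Set V} (hK : Convex ℝ K) {x : V} (hx : x ∈ K) {y : V} (hy : y ∈ K)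
    {ε : ℝ} (hε : 0 < ε) (h : x + ε • (-(y - x)) ∈ K) : y - x ∈ dirSpace K hK x hx := by
  have hm : 0 < min ε 1 := lt_min hε one_pos
  refine ⟨min ε 1, hm, ?_, dir_mono hK hx hm.le hε (min_le_left _ _) h⟩
  refine dir_mono hK hx hm.le one_pos (min_le_right _ _) ?_
  simpa using hy

lemma mem_dir_extreme {K : Set V} (hK : Convex ℝ K) {x : V} (hx : x ∈ K) {p y z : V}
    (hy : y ∈ K) (hz : z ∈ K) {a b : ℝ} (ha : 0 < a) (hb : 0 < b) (hab : a + b = 1)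
    (hp : p = a • y + b • z) (h : p - x ∈ dirSpace K hK x hx) : y - x ∈ dirSpace K hK x hx := by
  obtain ⟨δ, hδ, -, h2⟩ := h
  refine mem_dir_of hK hx hy (ε := δ * a / (1 + δ * b)) (by positivity) ?_
  have := hK h2 hz (a := 1 / (1 + δ * b)) (b := δ * b / (1 + δ * b)) (by positivity)
    (by positivity) (by field_simp)
  convert this using 1
  subst hp
  obtain rfl : a = 1 - b := by linarith
  match_scalars <;> field_simp <;> ring

lemma vectorSpan_genFace {K : Set V} (hK : Convex ℝ K) {x : V} (hx : x ∈ K) :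
    vectorSpan ℝ (genFace K x) = dirSpace K hK x hx := by
  apply le_antisymm
  · have hface : IsFaceOf K {y | y ∈ K ∧ y - x ∈ dirSpace K hK x hx} := by
      refine ⟨?_, fun y hy => hy.1, ?_⟩
      · intro y hy z hz a b ha hb hab
        refine ⟨hK hy.1 hz.1 ha hb hab, ?_⟩
        have := add_mem ((dirSpace K hK x hx).smul_mem a hy.2)
          ((dirSpace K hK x hx).smul_mem b hz.2)
        convert this using 1
        obtain rfl : a = 1 - b := by linarith
        module
      · intro p hp y hy z hz l hl e
        exact ⟨⟨hy, mem_dir_extreme hK hx hy hz (sub_pos.2 hl.2) hl.1 (by ring) e hp.2⟩,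
          ⟨hz, mem_dir_extreme hK hx hz hy hl.1 (sub_pos.2 hl.2) (by ring)
            (by rw [e, add_comm]) hp.2⟩⟩
    have hsub : genFace K x ⊆ {y | y ∈ K ∧ y - x ∈ dirSpace K hK x hx} :=
      Set.sInter_subset_of_mem ⟨hface, hx, by simp⟩
    rw [vectorSpan_def, Submodule.span_le]
    rintro _ ⟨y, hy, z, hz, rfl⟩
    have := sub_mem (hsub hy).2 (hsub hz).2
    simpa using this
  · rintro v ⟨ε, hε, h1, h2⟩
    have key : ∀ F, IsFaceOf K F ∧ x ∈ F → x + ε • v ∈ F ∧ x + ε • (-v) ∈ F := by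
      rintro F ⟨hF, hxF⟩
      refine hF.2.2 x hxF _ h1 _ h2 (1/2) (by norm_num) ?_
      module
    have g1 : x + ε • v ∈ genFace K x := fun F hF => (key F hF).1
    have g2 : x + ε • (-v) ∈ genFace K x := fun F hF => (key F hF).2
    have := (vectorSpan ℝ (genFace K x)).smul_mem (2 * ε)⁻¹ (vsub_mem_vectorSpan ℝ g1 g2)
    convert this using 1
    rw [vsub_eq_sub]
    match_scalars
    · field_simp
      norm_num
    · ring

/-- `f` has slope `c` at `x` in direction `v`. -/
def HasSlope (K : Set V) (f : V → EReal) (x : V) (r : ℝ) (v : V) (c : ℝ) : Prop :=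
  ∃ ε : ℝ, 0 < ε ∧ ∀ t : ℝ, |t| ≤ ε → x + t • v ∈ K ∧ f (x + t • v) = ((r + t * c : ℝ) : EReal)

lemma IsGenAffine.comb {K : Set V} {f : V → EReal} (hf : IsGenAffine K f) {y z : V}
    (hy : y ∈ K) (hz : z ∈ K) {a b : ℝ} (hfy : f y = (a : EReal)) (hfz : f z = (b : EReal))
    {l : ℝ} (hl : l ∈ Set.Icc (0:ℝ) 1) :
    f ((1 - l) • y + l • z) = (((1 - l) * a + l * b : ℝ) : EReal) := by
  rw [hf.2 y hy z hz l hl, hfy, hfz]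
  push_cast
  rfl

lemma ereal_half {a b : EReal} (ha : a ≠ ⊥) (hb : b ≠ ⊥) {r : ℝ}
    (h : (r : EReal) = ((1 - 1/2 : ℝ) : EReal) * a + ((1/2 : ℝ) : EReal) * b) :
    ∃ c : ℝ, a = ((r + c : ℝ) : EReal) ∧ b = ((r - c : ℝ) : EReal) := by
  have p1 : (0:ℝ) < 1 - 1/2 := by norm_num
  have p2 : (0:ℝ) < 1/2 := by norm_num
  induction a with
  | bot => exact absurd rfl ha
  | top =>
    exfalso
    rw [EReal.coe_mul_top_of_pos p1, EReal.top_add_of_ne_bot] at h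
    · exact EReal.coe_ne_top _ h
    · induction b with
      | bot => exact absurd rfl hb
      | top => rw [EReal.coe_mul_top_of_pos p2]; simp
      | coe b => rw [← EReal.coe_mul]; exact EReal.coe_ne_bot _
  | coe a =>
    induction b with
    | bot => exact absurd rfl hb
    | top =>
      exfalso
      rw [EReal.coe_mul_top_of_pos p2, ← EReal.coe_mul, EReal.coe_add_top] at h
      exact EReal.coe_ne_top _ h
    | coe b =>
      rw [← EReal.coe_mul, ← EReal.coe_mul, ← EReal.coe_add, EReal.coe_eq_coe_iff] at h
      refine ⟨a - r, ?_, ?_⟩ <;> rw [EReal.coe_eq_coe_iff] <;> linarith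

lemma slope_exists {K : Set V} (hK : Convex ℝ K) {f : V → EReal} (hf : IsGenAffine K f) {x : V}
    {r : ℝ} (hr : f x = (r : EReal)) {v : V} {ε : ℝ} (hε : 0 < ε)
    (h1 : x + ε • v ∈ K) (h2 : x + ε • (-v) ∈ K) :
    ∃ c : ℝ, ∀ t : ℝ, |t| ≤ ε →
      x + t • v ∈ K ∧ f (x + t • v) = ((r + t * c : ℝ) : EReal) := by
  have h := hf.2 _ h2 _ h1 (1/2) (by norm_num)
  have e : (1 - 1/2 : ℝ) • (x + ε • (-v)) + (1/2 : ℝ) • (x + ε • v) = x := by module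
  rw [e, hr] at h
  obtain ⟨c, hc1, hc2⟩ := ereal_half (hf.1 _ h2) (hf.1 _ h1) h
  refine ⟨-c / ε, fun t ht => ?_⟩
  rw [abs_le] at ht
  have hl : (t + ε) / (2 * ε) ∈ Set.Icc (0:ℝ) 1 := by
    constructor
    · apply div_nonneg <;> linarith
    · rw [div_le_one (by positivity)]; linarith
  have e2 : x + t • v = (1 - (t + ε) / (2 * ε)) • (x + ε • (-v)) +
      ((t + ε) / (2 * ε)) • (x + ε • v) := by
    match_scalars <;> field_simp <;> ring
  constructor
  · rw [e2]
    exact hK h2 h1 (sub_nonneg.2 hl.2) hl.1 (by ring)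
  · rw [e2, hf.comb h2 h1 hc1 hc2 hl, EReal.coe_eq_coe_iff]
    field_simp
    ring

lemma slope_unique {K : Set V} {f : V → EReal} {x : V} {r : ℝ} {v : V} {c d : ℝ}
    (h : HasSlope K f x r v c) (h' : HasSlope K f x r v d) : c = d := by
  obtain ⟨ε, hε, h⟩ := h
  obtain ⟨δ, hδ, h'⟩ := h'
  have hm : 0 < min ε δ := lt_min hε hδ
  have a := (h (min ε δ) (by rw [abs_of_pos hm]; exact min_le_left _ _)).2
  have b := (h' (min ε δ) (by rw [abs_of_pos hm]; exact min_le_right _ _)).2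
  rw [a, EReal.coe_eq_coe_iff] at b
  have : min ε δ * c = min ε δ * d := by linarith
  exact mul_left_cancel₀ hm.ne' this

lemma slope_add {K : Set V} (hK : Convex ℝ K) {f : V → EReal} (hf : IsGenAffine K f) {x : V}
    {r : ℝ} {v w : V} {c d : ℝ}
    (h : HasSlope K f x r v c) (h' : HasSlope K f x r w d) :
    HasSlope K f x r (v + w) (c + d) := by
  obtain ⟨ε, hε, h⟩ := h
  obtain ⟨δ, hδ, h'⟩ := h'
  have hm : 0 < min ε δ := lt_min hε hδ
  refine ⟨min ε δ / 2, by positivity, fun t ht => ?_⟩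
  have h2t : |2 * t| ≤ min ε δ := by rw [abs_mul, abs_two]; linarith
  obtain ⟨a1, a2⟩ := h (2 * t) (h2t.trans (min_le_left _ _))
  obtain ⟨b1, b2⟩ := h' (2 * t) (h2t.trans (min_le_right _ _))
  have e : x + t • (v + w) =
      (1 - 1/2 : ℝ) • (x + (2 * t) • v) + (1/2 : ℝ) • (x + (2 * t) • w) := by module
  rw [e]
  constructor
  · exact hK a1 b1 (by norm_num) (by norm_num) (by norm_num)
  · rw [hf.comb a1 b1 a2 b2 (by norm_num), EReal.coe_eq_coe_iff]
    ring

lemma slope_smul {K : Set V} {f : V → EReal} {x : V} {r : ℝ} {v : V} {c : ℝ} (a : ℝ)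
    (h : HasSlope K f x r v c) : HasSlope K f x r (a • v) (a * c) := by
  obtain ⟨ε, hε, h⟩ := h
  refine ⟨ε / (|a| + 1), by positivity, fun t ht => ?_⟩
  have := h (t * a) (by
    rw [abs_mul]
    rw [le_div_iff₀ (by positivity)] at ht
    nlinarith [abs_nonneg t, abs_nonneg a])
  rwa [mul_smul, mul_assoc] at this

lemma slope_linear {K : Set V} (hK : Convex ℝ K) {f : V → EReal} (hf : IsGenAffine K f) {x : V}
    (hx : x ∈ K) {r : ℝ} (hr : f x = (r : EReal)) :
    ∃ φ : dirSpace K hK x hx →ₗ[ℝ] ℝ, ∀ v : dirSpace K hK x hx, HasSlope K f x r (v : V) (φ v) := by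
  have : ∀ v : dirSpace K hK x hx, ∃ c, HasSlope K f x r v c := by
    rintro ⟨v, ε, hε, h1, h2⟩
    obtain ⟨c, hc⟩ := slope_exists hK hf hr hε h1 h2
    exact ⟨c, ε, hε, hc⟩
  choose φ hφ using this
  exact ⟨{ toFun := φ
           map_add' := fun v w => slope_unique (hφ (v + w)) (slope_add hK hf (hφ v) (hφ w))
           map_smul' := fun a v => slope_unique (hφ (a • v)) (slope_smul a (hφ v)) }, hφ⟩

lemma ereal_real_of_le {a : EReal} (ha : a ≠ ⊥) {r : ℝ} (h : a ≤ (r : EReal)) :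
    ∃ b : ℝ, a = (b : EReal) :=
  ⟨a.toReal, (EReal.coe_toReal (ne_top_of_le_ne_top (EReal.coe_ne_top r) h) ha).symm⟩

theorem stmt12 (K : Set V) (hK : Convex ℝ K) (ℓ : ℕ)
    (f : Fin ℓ → V → EReal) (hf : ∀ k, IsGenAffine K (f k))
    (α : Fin ℓ → ℝ) (s : Set (Fin ℓ))
    (x : V)
    (hx : x ∈ {y ∈ K | (∀ k ∉ s, f k y ≤ (α k : EReal)) ∧
                       (∀ k ∈ s, f k y = (α k : EReal))})
    (m : ℕ)
    (hm : Module.rank ℝ ↥(vectorSpan ℝ (genFace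
        {y ∈ K | (∀ k ∉ s, f k y ≤ (α k : EReal)) ∧
                 (∀ k ∈ s, f k y = (α k : EReal))} x)) = (m : Cardinal)) :
    ∃ j : ℕ, j ≤ ℓ ∧
      Module.rank ℝ ↥(vectorSpan ℝ (genFace K x)) = ((m + j : ℕ) : Cardinal) := by
  set L : Set V := {y ∈ K | (∀ k ∉ s, f k y ≤ (α k : EReal)) ∧
                 (∀ k ∈ s, f k y = (α k : EReal))} with hL
  have hxK : x ∈ K := hx.1
  have hreal : ∀ y ∈ L, ∀ k, ∃ b : ℝ, f k y = (b : EReal) := by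
    intro y hy k
    by_cases hk : k ∈ s
    · exact ⟨_, hy.2.2 k hk⟩
    · exact ereal_real_of_le ((hf k).1 y hy.1) (hy.2.1 k hk)
  have hLc : Convex ℝ L := by
    intro y hy z hz a b ha hb hab
    obtain rfl : a = 1 - b := by linarith
    have hbI : b ∈ Set.Icc (0:ℝ) 1 := ⟨hb, by linarith⟩
    refine ⟨hK hy.1 hz.1 ha hb hab, fun k hk => ?_, fun k hk => ?_⟩
    · obtain ⟨p, hp⟩ := hreal y hy k
      obtain ⟨q, hq⟩ := hreal z hz k
      have h1 := hy.2.1 k hk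
      have h2 := hz.2.1 k hk
      rw [hp, EReal.coe_le_coe_iff] at h1
      rw [hq, EReal.coe_le_coe_iff] at h2
      rw [(hf k).comb hy.1 hz.1 hp hq hbI, EReal.coe_le_coe_iff]
      nlinarith
    · rw [(hf k).comb hy.1 hz.1 (hy.2.2 k hk) (hz.2.2 k hk) hbI, EReal.coe_eq_coe_iff]
      ring
  rw [vectorSpan_genFace hLc hx] at hm
  rw [vectorSpan_genFace hK hxK]
  have hle : dirSpace L hLc x hx ≤ dirSpace K hK x hxK := by
    rintro v ⟨ε, hε, h1, h2⟩
    exact ⟨ε, hε, h1.1, h2.1⟩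
  have hφ : ∀ k, ∃ φ : dirSpace K hK x hxK →ₗ[ℝ] ℝ, ∃ r : ℝ, f k x = (r : EReal) ∧
      ∀ v : dirSpace K hK x hxK, HasSlope K (f k) x r (v : V) (φ v) := by
    intro k
    obtain ⟨r, hr⟩ := hreal x hx k
    obtain ⟨φ, hφ⟩ := slope_linear hK (hf k) hxK hr
    exact ⟨φ, r, hr, hφ⟩
  choose φ r hr hφ using hφ
  let Φ : dirSpace K hK x hxK →ₗ[ℝ] (Fin ℓ → ℝ) := LinearMap.pi φ
  have hker : (LinearMap.ker Φ).map (dirSpace K hK x hxK).subtype ≤ dirSpace L hLc x hx := by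
    rintro _ ⟨v, hv, rfl⟩
    obtain ⟨ε, hε, h1, h2⟩ := v.2
    have hv0 : ∀ k, φ k v = 0 := fun k => congrFun (LinearMap.mem_ker.1 hv) k
    have hconst : ∀ k, ∀ t : ℝ, |t| ≤ ε → f k (x + t • (v : V)) = f k x := by
      intro k t ht
      obtain ⟨c, hc⟩ := slope_exists hK (hf k) (hr k) hε h1 h2
      have hc0 : c = 0 := (slope_unique ⟨ε, hε, hc⟩ (hφ k v)).trans (hv0 k)
      rw [(hc t ht).2, hc0, hr k]
      simp
    have hin : ∀ t : ℝ, |t| ≤ ε → x + t • (v : V) ∈ K → x + t • (v : V) ∈ L := by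
      intro t ht hK'
      refine ⟨hK', fun k hk => ?_, fun k hk => ?_⟩
      · rw [hconst k t ht]; exact hx.2.1 k hk
      · rw [hconst k t ht]; exact hx.2.2 k hk
    refine ⟨ε, hε, hin ε (abs_of_pos hε).le h1, ?_⟩
    have e : ε • (-(v : V)) = (-ε) • (v : V) := by module
    have h2' := h2
    rw [e] at h2'
    have := hin (-ε) (by rw [abs_neg]; exact (abs_of_pos hε).le) h2'
    rw [← e] at this
    exact this
  have hkr : Module.rank ℝ (LinearMap.ker Φ) ≤ (m : Cardinal) := by
    rw [← hm, ← LinearEquiv.rank_eq (Submodule.equivMapOfInjective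
      (dirSpace K hK x hxK).subtype (Submodule.injective_subtype _) (LinearMap.ker Φ)).symm]
    exact Submodule.rank_mono hker
  have hrr : Module.rank ℝ (LinearMap.range Φ) ≤ (ℓ : Cardinal) := by
    refine (Submodule.rank_le _).trans ?_
    simp
  have hub : Module.rank ℝ (dirSpace K hK x hxK) ≤ ((m + ℓ : ℕ) : Cardinal) := by
    have h := LinearMap.lift_rank_range_add_rank_ker Φ
    have h1 := Cardinal.lift_le.{u_1}.2 hrr
    rw [Cardinal.lift_natCast] at h1
    rw [Cardinal.lift_id'.{0}, Cardinal.lift_id'.{0}] at h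
    rw [← h, add_comm]
    push_cast
    exact add_le_add hkr h1
  have hlb : (m : Cardinal) ≤ Module.rank ℝ (dirSpace K hK x hxK) := by
    rw [← hm]
    exact Submodule.rank_mono hle
  obtain ⟨n, hn⟩ := Cardinal.lt_aleph0.1 (hub.trans_lt Cardinal.natCast_lt_aleph0)
  rw [hn] at hub hlb ⊢
  have hub' : n ≤ m + ℓ := by exact_mod_cast hub
  have hlb' : m ≤ n := by exact_mod_cast hlb
  exact ⟨n - m, by omega, by congr 1; omega⟩
end

section
/- Let V be a real vector space, K ⊆ V a convex set, ℓ ∈ ℕ, u = {1, …, ℓ}, and for each k ∈ u let f_k : K → ℝ ∪ {+∞} be a generalized affine map and α_k ∈ ℝ. Suppose K has no face of dimension belonging to {1, …, ℓ}. Then for every s ⊆ u, every extreme point of the set K_u^s = {x ∈ K : f_k(x) ≤ α_k for all k ∈ u \ s, and f_k(x) = α_k for all k ∈ s} is an extreme point of K. -/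
variable {V : Type*} [AddCommGroup V] [Module ℝ V]

/-- `x` is an extreme point of `K`, i.e. `{x}` is an extreme subset of `K`. -/
def IsExtremePoint (K : Set V) (x : V) : Prop := IsExtremeSubset K {x}

/-- Directions in which one can move from `x` both ways inside `K`, with slopes of the `f k`. -/
def dirGraph (K : Set V) (hK : Convex ℝ K) {ℓ : ℕ} (f : Fin ℓ → V → EReal)
    (hf : ∀ k, IsGenAffine K (f k)) (x : V) (hx : x ∈ K) (a : Fin ℓ → ℝ)
    (ha : ∀ k, f k x = (a k : EReal)) : Submodule ℝ (V × (Fin ℓ → ℝ)) where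
  carrier := {p | ∃ ε : ℝ, 0 < ε ∧ ∀ t : ℝ, |t| ≤ ε → x + t • p.1 ∈ K ∧
    ∀ k, f k (x + t • p.1) = ((a k + t * p.2 k : ℝ) : EReal)}
  zero_mem' := ⟨1, one_pos, fun t _ => by simp [hx, ha]⟩
  add_mem' := by
    rintro ⟨u, w⟩ ⟨v, z⟩ ⟨ε, hε, h1⟩ ⟨δ, hδ, h2⟩
    refine ⟨min ε δ / 2, by positivity, fun t ht => ?_⟩
    have hm1 := min_le_left ε δ
    have hm2 := min_le_right ε δ
    have e2 : |2 * t| = 2 * |t| := by rw [abs_mul]; norm_num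
    obtain ⟨k1, g1⟩ := h1 (2 * t) (by rw [e2]; linarith)
    obtain ⟨k2, g2⟩ := h2 (2 * t) (by rw [e2]; linarith)
    dsimp only at k1 g1 k2 g2 ⊢
    have e : x + t • (u + v) =
        (1 - (1/2 : ℝ)) • (x + (2 * t) • u) + (1/2 : ℝ) • (x + (2 * t) • v) := by
      module
    simp only [Prod.fst_add, Prod.snd_add, Pi.add_apply]
    rw [e]
    refine ⟨hK k1 k2 (by norm_num) (by norm_num) (by norm_num), fun k => ?_⟩
    rw [(hf k).2 _ k1 _ k2 (1/2) ⟨by norm_num, by norm_num⟩, g1, g2]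
    norm_cast
    push_cast
    ring
  smul_mem' := by
    rintro c ⟨u, w⟩ ⟨ε, hε, h1⟩
    refine ⟨ε / (|c| + 1), by positivity, fun t ht => ?_⟩
    have hc := abs_nonneg c
    rw [le_div_iff₀ (by positivity)] at ht
    obtain ⟨k1, g1⟩ := h1 (t * c) (by rw [abs_mul]; nlinarith [abs_nonneg t])
    dsimp only at k1 g1 ⊢
    simp only [Prod.smul_fst, Prod.smul_snd, Pi.smul_apply, smul_eq_mul, smul_smul]
    refine ⟨k1, fun k => ?_⟩
    rw [g1, mul_assoc]

theorem genAffine_finite {K : Set V} {f : V → EReal} (hf : IsGenAffine K f) {p r : V}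
    (hp : p ∈ K) (hr : r ∈ K) {l : ℝ} (h0 : 0 < l) (h1 : l < 1) {a : ℝ}
    (h : f ((1 - l) • p + l • r) = (a : EReal)) :
    ∃ P R : ℝ, f p = (P : EReal) ∧ f r = (R : EReal) := by
  have e := hf.2 p hp r hr l ⟨h0.le, h1.le⟩
  rw [h] at e
  have np := hf.1 p hp
  have nr := hf.1 r hr
  have h1' : (0:ℝ) < 1 - l := by linarith
  generalize f p = P at *
  generalize f r = R at *
  induction P with
  | bot => exact absurd rfl np
  | top =>
    exfalso
    rw [EReal.coe_mul_top_of_pos h1'] at e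
    induction R with
    | bot => exact absurd rfl nr
    | top => rw [EReal.coe_mul_top_of_pos h0] at e; simp at e
    | coe R =>
      rw [← EReal.coe_mul, EReal.top_add_coe] at e
      exact EReal.coe_ne_top _ e
  | coe P =>
    induction R with
    | bot => exact absurd rfl nr
    | top =>
      exfalso
      rw [EReal.coe_mul_top_of_pos h0, ← EReal.coe_mul, EReal.coe_add_top] at e
      exact EReal.coe_ne_top _ e
    | coe R => exact ⟨P, R, rfl, rfl⟩

theorem sub_mem_dir (K : Set V) (hK : Convex ℝ K) {ℓ : ℕ} (f : Fin ℓ → V → EReal)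
    (hf : ∀ k, IsGenAffine K (f k)) (x : V) (hx : x ∈ K) (a : Fin ℓ → ℝ)
    (ha : ∀ k, f k x = (a k : EReal)) {p r : V} (hp : p ∈ K) (hr : r ∈ K) {l : ℝ}
    (h0 : 0 < l) (h1 : l < 1) (e : x = (1 - l) • p + l • r) :
    p - x ∈ (dirGraph K hK f hf x hx a ha).map (LinearMap.fst ℝ V (Fin ℓ → ℝ)) := by
  have hfin : ∀ k, ∃ P R : ℝ, f k p = (P : EReal) ∧ f k r = (R : EReal) := fun k =>
    genAffine_finite (hf k) hp hr h0 h1 (a := a k) (by rw [← e, ha])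
  choose P R hP hR using hfin
  have hak : ∀ k, a k = (1 - l) * P k + l * R k := fun k => by
    have := (hf k).2 p hp r hr l ⟨h0.le, h1.le⟩
    rw [← e, ha, hP, hR] at this
    exact_mod_cast this
  refine ⟨(p - x, fun k => l * (P k - R k)), ⟨1 - l, by linarith, fun t ht => ?_⟩, rfl⟩
  dsimp only
  rw [abs_le] at ht
  have e' : x + t • (p - x) = (1 - l * (1 - t)) • p + (l * (1 - t)) • r := by
    rw [e]; module
  have b0 : 0 ≤ l * (1 - t) := mul_nonneg h0.le (by linarith)
  have b1 : l * (1 - t) ≤ 1 := by nlinarith [sq_nonneg (1 - l)]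
  rw [e']
  refine ⟨hK hp hr (by linarith) b0 (by ring), fun k => ?_⟩
  rw [(hf k).2 p hp r hr _ ⟨b0, b1⟩, hP, hR, hak]
  norm_cast
  ring

theorem stmt14 (K : Set V) (hK : Convex ℝ K) (ℓ : ℕ)
    (f : Fin ℓ → V → EReal) (hf : ∀ k, IsGenAffine K (f k))
    (α : Fin ℓ → ℝ)
    (hKfaces : ∀ F : Set V, IsFaceOf K F → ∀ d : ℕ, 1 ≤ d → d ≤ ℓ →
      Module.rank ℝ ↥(vectorSpan ℝ F) ≠ (d : Cardinal)) :
    ∀ s : Set (Fin ℓ), ∀ x : V,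
      IsExtremePoint {y ∈ K | (∀ k ∉ s, f k y ≤ (α k : EReal)) ∧
                              (∀ k ∈ s, f k y = (α k : EReal))} x →
      IsExtremePoint K x := by
  intro s x hxe
  obtain ⟨hx, hxs, hxs'⟩ := hxe.1 (Set.mem_singleton x)
  have hfin : ∀ k, ∃ a : ℝ, f k x = (a : EReal) := fun k => by
    have h1 : f k x ≤ (α k : EReal) := by
      by_cases hk : k ∈ s
      · exact (hxs' k hk).le
      · exact hxs k hk
    have h2 : f k x ≠ ⊤ := fun h => by rw [h] at h1; simp at h1
    exact ⟨(f k x).toReal, (EReal.coe_toReal h2 ((hf k).1 x hx)).symm⟩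
  choose a ha using hfin
  set G := dirGraph K hK f hf x hx a ha with hG
  set D := G.map (LinearMap.fst ℝ V (Fin ℓ → ℝ)) with hD
  -- a direction along which all maps are constant is trivial
  have hinj : ∀ v : V, ((v, 0) : V × (Fin ℓ → ℝ)) ∈ G → v = 0 := by
    rintro v ⟨ε, hε, h⟩
    have hC : ∀ t : ℝ, |t| ≤ ε → x + t • v ∈ {y ∈ K | (∀ k ∉ s, f k y ≤ (α k : EReal)) ∧
                              (∀ k ∈ s, f k y = (α k : EReal))} := by
      intro t ht
      obtain ⟨m, g⟩ := h t ht
      have g' : ∀ k, f k (x + t • v) = f k x := fun k => by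
        have := g k
        simp only [Pi.zero_apply, mul_zero, add_zero] at this
        rw [this, ha]
      refine ⟨m, fun k hk => ?_, fun k hk => ?_⟩
      · rw [g']; exact hxs k hk
      · rw [g']; exact hxs' k hk
    have := (hxe.2 x rfl _ (hC ε (abs_of_pos hε).le) _
      (hC (-ε) (by rw [abs_neg, abs_of_pos hε])) (1/2) ⟨by norm_num, by norm_num⟩
      (by module)).1
    have h3 : ε • v = 0 := by simpa using this
    exact (smul_eq_zero.1 h3).resolve_left hε.ne'
  have hrG : Module.rank ℝ G ≤ (ℓ : Cardinal) := by
    have : Function.Injective ((LinearMap.snd ℝ V (Fin ℓ → ℝ)).comp G.subtype) := by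
      rw [← LinearMap.ker_eq_bot, LinearMap.ker_eq_bot']
      rintro ⟨⟨v, w⟩, hm⟩ h0
      have h0 : w = 0 := h0
      subst h0
      have := hinj v hm
      subst this
      rfl
    have h := LinearMap.lift_rank_le_of_injective _ this
    rw [rank_fin_fun] at h
    simpa using h
  have hrD : Module.rank ℝ D ≤ (ℓ : Cardinal) := by
    have h := lift_rank_map_le (LinearMap.fst ℝ V (Fin ℓ → ℝ)) G
    have h' : Module.rank ℝ D ≤ Module.rank ℝ G := by simpa using h
    exact h'.trans hrG
  have hmem : ∀ {p r : V}, p ∈ K → r ∈ K → ∀ {l : ℝ}, 0 < l → l < 1 →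
      x = (1 - l) • p + l • r → p - x ∈ D := fun hp hr _ h0 h1 e =>
    sub_mem_dir K hK f hf x hx a ha hp hr h0 h1 e
  have hDe : ∀ v ∈ D, ∃ ε : ℝ, 0 < ε ∧ x - ε • v ∈ K := by
    rintro _ ⟨⟨v, w⟩, ⟨ε, hε, h⟩, rfl⟩
    refine ⟨ε, hε, ?_⟩
    have := (h (-ε) (by rw [abs_neg, abs_of_pos hε])).1
    simpa [sub_eq_add_neg] using this
  set F : Set V := {y ∈ K | y - x ∈ D} with hF
  have hxF : x ∈ F := ⟨hx, by simp⟩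
  -- half of extremality
  have hext : ∀ y ∈ F, ∀ p ∈ K, ∀ q ∈ K, ∀ l : ℝ, 0 < l → l < 1 →
      y = (1 - l) • p + l • q → p ∈ F := by
    rintro y ⟨hy, hyD⟩ p hp q hq l h0 h1 e
    obtain ⟨ε, hε, hz⟩ := hDe _ hyD
    refine ⟨hp, ?_⟩
    have hd : 0 < 1 + ε * l := by positivity
    have hr := hK hz hq (a := 1 / (1 + ε * l)) (b := ε * l / (1 + ε * l))
      (by positivity) (by positivity) (by field_simp)
    refine hmem hp hr (l := (1 + ε * l) / (1 + ε)) (by positivity)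
      (by rw [div_lt_one (by positivity)]; nlinarith) ?_
    rw [e]
    match_scalars <;> field_simp <;> ring
  have hface : IsFaceOf K F := by
    refine ⟨?_, fun y hy => hy.1, ?_⟩
    · intro y hy z hz b c hb hc hbc
      refine ⟨hK hy.1 hz.1 hb hc hbc, ?_⟩
      have : b • y + c • z - x = b • (y - x) + c • (z - x) := by
        have : b = 1 - c := by linarith
        subst this; module
      rw [this]
      exact D.add_mem (D.smul_mem _ hy.2) (D.smul_mem _ hz.2)
    · intro y hy p hp q hq l hl e
      exact ⟨hext y hy p hp q hq l hl.1 hl.2 e,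
        hext y hy q hq p hp (1 - l) (by linarith [hl.2]) (by linarith [hl.1])
          (by rw [e]; module)⟩
  have hspan : vectorSpan ℝ F ≤ D := by
    rw [vectorSpan_eq_span_vsub_set_right ℝ hxF, Submodule.span_le]
    rintro _ ⟨y, hy, rfl⟩
    exact hy.2
  have hrF : Module.rank ℝ (vectorSpan ℝ F) ≤ (ℓ : Cardinal) :=
    (Submodule.rank_mono hspan).trans hrD
  obtain ⟨d, hd⟩ := Cardinal.lt_aleph0.1 (hrF.trans_lt (Cardinal.natCast_lt_aleph0))
  have hdl : d ≤ ℓ := by rw [hd] at hrF; exact_mod_cast hrF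
  have hd0 : d = 0 := by
    by_contra h
    exact hKfaces F hface d (Nat.one_le_iff_ne_zero.2 h) hdl hd
  subst hd0
  have hbot : vectorSpan ℝ F = ⊥ := by
    rw [← Submodule.rank_eq_zero]; simpa using hd
  have hsub : ∀ y ∈ F, y = x := fun y hy => by
    have h := vsub_mem_vectorSpan ℝ hy hxF
    rw [hbot, Submodule.mem_bot] at h
    exact sub_eq_zero.1 h
  refine ⟨by simpa using hx, ?_⟩
  rintro y rfl p hp q hq l hl e
  obtain ⟨h1, h2⟩ := hface.2.2 y hxF p hp q hq l hl e
  exact ⟨hsub p h1, hsub q h2⟩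
end

section
/- Let V be a real vector space, K ⊆ V a nonempty convex set, and o ∈ V a point outside the affine hull of K. Then the set of faces of the pyramid P(K,o) is the union of the set 𝓕₁ of faces of K and the set 𝓕₂ = {P(F,o) : F ∈ 𝓕₁} of pyramids over faces of K (where P(∅,o) = {o}). That is, a subset G ⊆ P(K,o) is a face of P(K,o) if and only if G is a face of K or G = P(F,o) for some face F of K. -/
variable {V : Type*} [AddCommGroup V] [Module ℝ V]

/-- The pyramid with apex `o` over `F`: the union of all closed segments
joining points of `F` with `o`; by convention `pyr ∅ o = {o}`. -/
def pyr (F : Set V) (o : V) : Set V := {o} ∪ ⋃ x ∈ F, segment ℝ x o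

theorem mem_pyr_aux {F : Set V} {o p : V} :
    p ∈ pyr F o ↔ p = o ∨ ∃ x ∈ F, ∃ t : ℝ, 0 ≤ t ∧ t ≤ 1 ∧ p = (1 - t) • x + t • o := by
  unfold pyr
  simp only [Set.mem_union, Set.mem_singleton_iff, Set.mem_iUnion, exists_prop]
  refine or_congr Iff.rfl (exists_congr fun x => and_congr Iff.rfl ?_)
  constructor
  · rintro ⟨a, b, ha, hb, hab, rfl⟩
    refine ⟨b, hb, by linarith, ?_⟩
    rw [show a = 1 - b by linarith]
  · rintro ⟨t, h0, h1, rfl⟩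
    exact ⟨1 - t, t, by linarith, h0, by ring, rfl⟩

theorem mem_pyr_ne {F : Set V} (hF : F.Nonempty) {o p : V} (h : p ∈ pyr F o) :
    ∃ x ∈ F, ∃ t : ℝ, 0 ≤ t ∧ t ≤ 1 ∧ p = (1 - t) • x + t • o := by
  rcases mem_pyr_aux.1 h with h | h
  · obtain ⟨x, hx⟩ := hF
    exact ⟨x, hx, 1, by norm_num, le_rfl, by simp [h]⟩
  · exact h

theorem subset_pyr {F : Set V} {o : V} : F ⊆ pyr F o := fun x hx =>
  mem_pyr_aux.2 (Or.inr ⟨x, hx, 0, le_rfl, by norm_num, by simp⟩)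

theorem apex_mem_pyr {F : Set V} {o : V} : o ∈ pyr F o := mem_pyr_aux.2 (Or.inl rfl)

theorem convex_pyr {F : Set V} (hF : Convex ℝ F) (o : V) : Convex ℝ (pyr F o) := by
  rcases F.eq_empty_or_nonempty with rfl | hne
  · simp [pyr]
  · have : pyr F o = convexJoin ℝ F {o} := by
      ext p
      simp only [mem_convexJoin, pyr, Set.mem_union, Set.mem_singleton_iff, Set.mem_iUnion,
        exists_prop, exists_eq_left]
      constructor
      · rintro (rfl | h)
        · obtain ⟨x, hx⟩ := hne
          exact ⟨x, hx, right_mem_segment ℝ x p⟩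
        · exact h
      · exact Or.inr
    rw [this]
    exact hF.convexJoin (convex_singleton o)

theorem exists_height {K : Set V} (hne : K.Nonempty) {o : V} (ho : o ∉ affineSpan ℝ K) :
    ∃ (g : V →ₗ[ℝ] ℝ) (c : ℝ), (∀ k ∈ K, g k = c) ∧ g o = c + 1 := by
  obtain ⟨k0, hk0⟩ := hne
  have hk0' := subset_affineSpan ℝ K hk0
  have hn : o - k0 ∉ (affineSpan ℝ K).direction := by
    intro h
    apply ho
    have := AffineSubspace.vadd_mem_of_mem_direction h hk0'
    simpa using this
  obtain ⟨f, hf, hle⟩ := Submodule.exists_le_ker_of_notMem hn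
  refine ⟨(f (o - k0))⁻¹ • f, (f (o - k0))⁻¹ * f k0, ?_, ?_⟩
  · intro k hk
    have h1 : f (k - k0) = 0 :=
      hle (AffineSubspace.vsub_mem_direction (subset_affineSpan ℝ K hk) hk0')
    rw [map_sub, sub_eq_zero] at h1
    simp [h1]
  · have : f o = f k0 + f (o - k0) := by simp
    simp only [LinearMap.smul_apply, smul_eq_mul]
    rw [this, mul_add, inv_mul_cancel₀ hf]

theorem stmt15 (K : Set V) (hK : Convex ℝ K) (hne : K.Nonempty)
    (o : V) (ho : o ∉ affineSpan ℝ K) :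
    ∀ G : Set V, IsFaceOf (pyr K o) G ↔
      (IsFaceOf K G ∨ ∃ F : Set V, IsFaceOf K F ∧ G = pyr F o) := by
  obtain ⟨g, c, hgK, hgo⟩ := exists_height hne ho
  have hval : ∀ x ∈ K, ∀ t : ℝ, g ((1 - t) • x + t • o) = c + t := by
    intro x hx t
    simp only [map_add, map_smul, smul_eq_mul, hgK x hx, hgo]
    ring
  intro G
  constructor
  · rintro ⟨hconv, hsub, hext⟩
    have hface : IsFaceOf K (G ∩ K) := by
      refine ⟨hconv.inter hK, Set.inter_subset_right, ?_⟩
      intro x hx y hy z hz l hl h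
      have := hext x hx.1 y (subset_pyr hy) z (subset_pyr hz) l hl h
      exact ⟨⟨this.1, hy⟩, ⟨this.2, hz⟩⟩
    have key : ∀ p ∈ G, p ∈ K ∨ p = o ∨ (o ∈ G ∧ p ∈ pyr (G ∩ K) o) := by
      intro p hp
      obtain ⟨x, hx, t, h0, h1, hpe⟩ := mem_pyr_ne hne (hsub hp)
      rcases h0.eq_or_lt with rfl | h0'
      · left; simpa [hpe] using hx
      rcases h1.eq_or_lt with rfl | h1'
      · right; left; simpa using hpe
      · right; right
        have := hext p hp x (subset_pyr hx) o apex_mem_pyr t ⟨h0', h1'⟩ hpe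
        exact ⟨this.2, mem_pyr_aux.2 (Or.inr ⟨x, ⟨this.1, hx⟩, t, h0, h1, hpe⟩)⟩
    by_cases hoG : o ∈ G
    · right
      refine ⟨G ∩ K, hface, Set.Subset.antisymm ?_ ?_⟩
      · intro p hp
        rcases key p hp with h | rfl | h
        · exact subset_pyr ⟨hp, h⟩
        · exact apex_mem_pyr
        · exact h.2
      · intro p hp
        rcases mem_pyr_aux.1 hp with rfl | ⟨x, hx, t, h0, h1, rfl⟩
        · exact hoG
        · exact hconv hx.1 hoG (by linarith) h0 (by ring)
    · left
      have : G ∩ K = G := by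
        refine Set.inter_eq_left.2 fun p hp => ?_
        rcases key p hp with h | rfl | h
        · exact h
        · exact absurd hp hoG
        · exact absurd h.1 hoG
      rwa [this] at hface
  · rintro (⟨hconv, hsub, hext⟩ | ⟨F, ⟨hconv, hsub, hext⟩, rfl⟩)
    · refine ⟨hconv, hsub.trans subset_pyr, ?_⟩
      intro x hx y hy z hz l hl h
      obtain ⟨a, ha, s, hs0, hs1, rfl⟩ := mem_pyr_ne hne hy
      obtain ⟨b, hb, r, hr0, hr1, rfl⟩ := mem_pyr_ne hne hz
      have e := congrArg g h
      rw [map_add, map_smul, map_smul, hval a ha, hval b hb, hgK x (hsub hx)] at e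
      simp only [smul_eq_mul] at e
      obtain ⟨hl0, hl1⟩ := hl
      have e1 : (1 - l) * s + l * r = 0 := by linarith
      have p1 : 0 ≤ (1 - l) * s := mul_nonneg (by linarith) hs0
      have p2 : 0 ≤ l * r := mul_nonneg hl0.le hr0
      have hs : s = 0 := (mul_eq_zero.1 (by linarith : (1 - l) * s = 0)).resolve_left (by linarith)
      have hr : r = 0 := (mul_eq_zero.1 (by linarith : l * r = 0)).resolve_left (by linarith)
      subst hs hr
      simp only [sub_zero, one_smul, zero_smul, add_zero] at h ⊢
      exact hext x hx a ha b hb l ⟨hl0, hl1⟩ h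
    · refine ⟨convex_pyr hconv o, ?_, ?_⟩
      · intro p hp
        rcases mem_pyr_aux.1 hp with rfl | ⟨x, hx, h⟩
        · exact apex_mem_pyr
        · exact mem_pyr_aux.2 (Or.inr ⟨x, hsub hx, h⟩)
      intro p hp y hy z hz l hl h
      obtain ⟨a, ha, s, hs0, hs1, rfl⟩ := mem_pyr_ne hne hy
      obtain ⟨b, hb, r, hr0, hr1, rfl⟩ := mem_pyr_ne hne hz
      obtain ⟨hl0, hl1⟩ := hl
      have e := congrArg g h
      rw [map_add, map_smul, map_smul, hval a ha, hval b hb] at e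
      simp only [smul_eq_mul] at e
      have p1 : 0 ≤ (1 - l) * (1 - s) := mul_nonneg (by linarith) (by linarith)
      have p2 : 0 ≤ l * (1 - r) := mul_nonneg hl0.le (by linarith)
      -- it suffices to handle the base points
      suffices H : (s = 1 ∨ a ∈ F) ∧ (r = 1 ∨ b ∈ F) by
        constructor
        · rcases H.1 with rfl | h'
          · simpa using apex_mem_pyr
          · exact mem_pyr_aux.2 (Or.inr ⟨a, h', s, hs0, hs1, rfl⟩)
        · rcases H.2 with rfl | h'
          · simpa using apex_mem_pyr
          · exact mem_pyr_aux.2 (Or.inr ⟨b, h', r, hr0, hr1, rfl⟩)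
      have hboth : (1 - l) * (1 - s) + l * (1 - r) = 0 → s = 1 ∧ r = 1 := by
        intro e1
        have h1 := (mul_eq_zero.1 (by linarith : (1 - l) * (1 - s) = 0)).resolve_left
          (by linarith)
        have h2 := (mul_eq_zero.1 (by linarith : l * (1 - r) = 0)).resolve_left (by linarith)
        exact ⟨by linarith, by linarith⟩
      rcases mem_pyr_aux.1 hp with rfl | ⟨x, hx, t, h0, h1, rfl⟩
      · rw [hgo] at e
        obtain ⟨h1, h2⟩ := hboth (by linarith)
        exact ⟨Or.inl h1, Or.inl h2⟩
      rw [hval x (hsub hx)] at e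
      have et : 1 - t = (1 - l) * (1 - s) + l * (1 - r) := by linarith
      have ett : t = (1 - l) * s + l * r := by linarith
      rcases h1.eq_or_lt with rfl | h1'
      · obtain ⟨h1, h2⟩ := hboth (by linarith)
        exact ⟨Or.inl h1, Or.inl h2⟩
      have ht : 1 - t ≠ 0 := by linarith
      have hx2 : (1 - t) • x = ((1 - l) * (1 - s)) • a + (l * (1 - r)) • b := by
        have : (1 - t) • x + t • o =
            ((1 - l) * (1 - s)) • a + (l * (1 - r)) • b + ((1 - l) * s + l * r) • o := by
          rw [h]; module
        rw [← ett] at this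
        exact add_right_cancel this
      by_cases hs : s = 1
      · refine ⟨Or.inl hs, Or.inr ?_⟩
        have e3 : l * (1 - r) = 1 - t := by rw [et, hs]; ring
        rw [e3, hs] at hx2
        have : x = b := smul_right_injective V ht (by simpa using hx2)
        exact this ▸ hx
      by_cases hr : r = 1
      · refine ⟨Or.inr ?_, Or.inl hr⟩
        have e3 : (1 - l) * (1 - s) = 1 - t := by rw [et, hr]; ring
        rw [e3, hr] at hx2
        have : x = a := smul_right_injective V ht (by simpa using hx2)
        exact this ▸ hx
      have hs' : s < 1 := lt_of_le_of_ne hs1 hs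
      have hr' : r < 1 := lt_of_le_of_ne hr1 hr
      have q1 : 0 < (1 - l) * (1 - s) := mul_pos (by linarith) (by linarith)
      have q2 : 0 < l * (1 - r) := mul_pos hl0 (by linarith)
      have ht' : 0 < 1 - t := by linarith
      have := hext x hx a ha b hb (l * (1 - r) / (1 - t))
        ⟨by positivity, by rw [div_lt_one ht']; linarith⟩ (by
          apply smul_right_injective V ht
          simp only [smul_add, smul_smul]
          have w : (1 - t) * (l * (1 - r) / (1 - t)) = l * (1 - r) := mul_div_cancel₀ _ ht
          have w2 : (1 - t) * (1 - l * (1 - r) / (1 - t)) = (1 - l) * (1 - s) := by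
            rw [mul_sub (1 - t), w]; linarith
          rw [hx2, w, w2])
      exact ⟨Or.inr this.1, Or.inr this.2⟩
end

section
/- Let K ⊂ ℝ[x] denote the convex set of univariate real polynomials with positive leading coefficient (in particular all elements of K are nonzero). For n ∈ ℕ let F_n = {q ∈ K : deg(q) ≤ n}. Then: (1) for every p ∈ K, the face of K generated by p is F_K(p) = F_{deg(p)}; (2) for every n ∈ ℕ, the relative algebraic interior of F_n is ri(F_n) = {q ∈ K : deg(q) = n}; (3) every nonempty extreme subset of K is equal to K or to F_n for some n ∈ ℕ. -/
variable {V : Type*} [AddCommGroup V] [Module ℝ V]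

open Polynomial in
/-- positivity of the `n`-th coefficient pins degree and sign -/
theorem aux_pos {q : ℝ[X]} {n : ℕ} (h : q.natDegree ≤ n) (hc : 0 < q.coeff n) :
    0 < q.leadingCoeff ∧ q.natDegree = n := by
  have h2 : q.natDegree = n := le_antisymm h (le_natDegree_of_ne_zero hc.ne')
  refine ⟨?_, h2⟩
  rw [leadingCoeff, h2]; exact hc

open Polynomial in
theorem aux_nonneg {q : ℝ[X]} {n : ℕ} (h : q.natDegree ≤ n) (hc : 0 < q.leadingCoeff) :
    0 ≤ q.coeff n := by
  rcases h.lt_or_eq with h1 | h1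
  · rw [coeff_eq_zero_of_natDegree_lt h1]
  · rw [← h1]; exact hc.le

open Polynomial in
theorem aux_comb_le {y z : ℝ[X]} {n : ℕ} (a b : ℝ) (hy : y.natDegree ≤ n) (hz : z.natDegree ≤ n) :
    (a • y + b • z).natDegree ≤ n :=
  natDegree_add_le_of_degree_le ((natDegree_smul_le a y).trans hy) ((natDegree_smul_le b z).trans hz)

open Polynomial in
theorem aux_comb {y z : ℝ[X]} {a b : ℝ} (ha : 0 < a) (hb : 0 < b)
    (hy : 0 < y.leadingCoeff) (hz : 0 < z.leadingCoeff) :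
    0 < (a • y + b • z).leadingCoeff ∧
      (a • y + b • z).natDegree = max y.natDegree z.natDegree := by
  apply aux_pos (aux_comb_le a b (le_max_left _ _) (le_max_right _ _))
  have h1 := aux_nonneg (le_max_left y.natDegree z.natDegree) hy
  have h2 := aux_nonneg (le_max_right y.natDegree z.natDegree) hz
  simp only [coeff_add, coeff_smul, smul_eq_mul]
  rcases le_total y.natDegree z.natDegree with h | h
  · rw [max_eq_right h] at *
    have : 0 < z.coeff z.natDegree := hz
    positivity
  · rw [max_eq_left h] at *
    have : 0 < y.coeff y.natDegree := hy
    positivity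

open Polynomial in
theorem aux_perturb {p r : ℝ[X]} (hp : 0 < p.leadingCoeff) (hr : r.natDegree ≤ p.natDegree) :
    ∃ ε : ℝ, 0 < ε ∧
      (0 < (p + ε • r).leadingCoeff ∧ (p + ε • r).natDegree = p.natDegree) ∧
      (0 < (p - ε • r).leadingCoeff ∧ (p - ε • r).natDegree = p.natDegree) := by
  have hp' : 0 < p.coeff p.natDegree := hp
  set c := p.coeff p.natDegree with hc
  set d := r.coeff p.natDegree with hd
  have hd0 := abs_nonneg d
  have hε : 0 < c / (|d| + 1) := by positivity
  have hlt : c / (|d| + 1) * |d| < c := by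
    rw [div_mul_eq_mul_div, div_lt_iff₀ (by positivity)]; nlinarith
  have h1 : |c / (|d| + 1) * d| < c := by rwa [abs_mul, abs_of_pos hε]
  have h2 := abs_lt.1 h1
  refine ⟨_, hε, aux_pos ?_ ?_, aux_pos ?_ ?_⟩
  · exact natDegree_add_le_of_degree_le le_rfl ((natDegree_smul_le (c / (|d| + 1)) r).trans hr)
  · simp only [coeff_add, coeff_smul, smul_eq_mul, ← hc, ← hd]; linarith
  · exact (natDegree_sub_le _ _).trans
      (max_le le_rfl ((natDegree_smul_le (c / (|d| + 1)) r).trans hr))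
  · simp only [coeff_sub, coeff_smul, smul_eq_mul, ← hc, ← hd]; linarith

open Polynomial in
theorem aux_extreme {E : Set ℝ[X]}
    (hE : IsExtremeSubset {p : Polynomial ℝ | 0 < p.leadingCoeff} E) {p q : ℝ[X]}
    (hp : p ∈ E) (hq : 0 < q.leadingCoeff) (hd : q.natDegree ≤ p.natDegree) : q ∈ E := by
  obtain ⟨ε, hε, ⟨h1, -⟩, -⟩ := aux_perturb (r := p - q) (hE.1 hp)
    ((natDegree_sub_le p q).trans (max_le le_rfl hd))
  refine (hE.2 p hp _ h1 q hq (ε / (1 + ε)) ⟨by positivity, ?_⟩ ?_).2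
  · rw [div_lt_one (by positivity)]; linarith
  · have h0 : (1 + ε) ≠ 0 := by positivity
    have e1 : (1 - ε / (1 + ε)) * ε = ε / (1 + ε) := by field_simp; ring
    rw [smul_add, smul_smul, e1, smul_sub, sub_smul, one_smul]
    abel

theorem aux_face_s17 (n : ℕ) : IsFaceOf {p : Polynomial ℝ | 0 < p.leadingCoeff}
    {q : Polynomial ℝ | 0 < q.leadingCoeff ∧ q.natDegree ≤ n} := by
  refine ⟨convex_iff_forall_pos.2 ?_, fun q h => h.1, ?_⟩
  · intro x hx y hy a b ha hb _
    obtain ⟨h1, h2⟩ := aux_comb ha hb hx.1 hy.1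
    exact ⟨h1, h2.le.trans (max_le hx.2 hy.2)⟩
  · rintro x hx y hy z hz l ⟨hl0, hl1⟩ rfl
    obtain ⟨h1, h2⟩ := aux_comb (sub_pos.2 hl1) hl0 hy hz
    have := hx.2
    rw [h2] at this
    exact ⟨⟨hy, (le_max_left _ _).trans this⟩, ⟨hz, (le_max_right _ _).trans this⟩⟩

theorem stmt17 :
    (∀ p ∈ {p : Polynomial ℝ | 0 < p.leadingCoeff},
      genFace {p : Polynomial ℝ | 0 < p.leadingCoeff} p =
        {q : Polynomial ℝ | 0 < q.leadingCoeff ∧ q.natDegree ≤ p.natDegree}) ∧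
    (∀ n : ℕ,
      riSet {q : Polynomial ℝ | 0 < q.leadingCoeff ∧ q.natDegree ≤ n} =
        {q : Polynomial ℝ | 0 < q.leadingCoeff ∧ q.natDegree = n}) ∧
    (∀ E : Set (Polynomial ℝ),
      IsExtremeSubset {p : Polynomial ℝ | 0 < p.leadingCoeff} E → E.Nonempty →
      E = {p : Polynomial ℝ | 0 < p.leadingCoeff} ∨
      ∃ n : ℕ, E = {q : Polynomial ℝ | 0 < q.leadingCoeff ∧ q.natDegree ≤ n}) := by
  refine ⟨?_, ?_, ?_⟩
  · intro p hp
    apply Set.Subset.antisymm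
    · exact Set.sInter_subset_of_mem ⟨aux_face_s17 _, hp, le_rfl⟩
    · rintro q ⟨hq, hd⟩ F ⟨hF, hpF⟩
      exact aux_extreme hF.2 hpF hq hd
  · intro n
    ext q
    constructor
    · rintro ⟨⟨hq, hd⟩, h⟩
      refine ⟨hq, ?_⟩
      by_contra hne
      have hlt : q.natDegree < n := lt_of_le_of_ne hd hne
      obtain ⟨ε, hε, -, h2⟩ := h (Polynomial.X ^ n)
        (subset_affineSpan ℝ _ ⟨by simp, by simp⟩)
      have h3 := aux_nonneg h2.2 h2.1
      simp only [Polynomial.coeff_sub, Polynomial.coeff_smul, smul_eq_mul,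
        Polynomial.coeff_X_pow, if_true, Polynomial.coeff_eq_zero_of_natDegree_lt hlt] at h3
      linarith
    · rintro ⟨hq, rfl⟩
      refine ⟨⟨hq, le_rfl⟩, ?_⟩
      intro y hy
      have hle : affineSpan ℝ {r : Polynomial ℝ | 0 < r.leadingCoeff ∧ r.natDegree ≤ q.natDegree}
          ≤ (Polynomial.degreeLE ℝ (q.natDegree : WithBot ℕ)).toAffineSubspace := by
        rw [affineSpan_le]
        rintro r ⟨-, hr⟩
        exact Polynomial.mem_degreeLE.2 (Polynomial.natDegree_le_iff_degree_le.1 hr)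
      have hy' : y.natDegree ≤ q.natDegree :=
        Polynomial.natDegree_le_iff_degree_le.2 (Polynomial.mem_degreeLE.1 (hle hy))
      obtain ⟨ε, hε, h1, h2⟩ := aux_perturb (r := y - q) hq
        ((Polynomial.natDegree_sub_le y q).trans (max_le hy' le_rfl))
      exact ⟨ε, hε, ⟨h1.1, h1.2.le⟩, ⟨h2.1, h2.2.le⟩⟩
  · intro E hE hne
    by_cases hb : BddAbove (Polynomial.natDegree '' E)
    · right
      obtain ⟨p, hp, hpn⟩ := Nat.sSup_mem (hne.image Polynomial.natDegree) hb
      refine ⟨p.natDegree, Set.Subset.antisymm ?_ ?_⟩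
      · intro q hq
        exact ⟨hE.1 hq, hpn ▸ le_csSup hb ⟨q, hq, rfl⟩⟩
      · rintro q ⟨hq, hd⟩
        exact aux_extreme hE hp hq hd
    · left
      refine Set.Subset.antisymm hE.1 ?_
      intro q hq
      rw [not_bddAbove_iff] at hb
      obtain ⟨_, ⟨p, hp, rfl⟩, h⟩ := hb q.natDegree
      exact aux_extreme hE hp hq h.le
end

section
/- Let Δ_ℕ = {p : ℕ → ℝ : p(n) ≥ 0 for all n, and Σ_{n∈ℕ} p(n) = 1} be the convex set of probability densities on ℕ, and for p ∈ Δ_ℕ let supp(p) = {n ∈ ℕ : p(n) > 0}. Then for every p ∈ Δ_ℕ: (1) the face of Δ_ℕ generated by p is F_{Δ_ℕ}(p) = {q ∈ Δ_ℕ : supp(q) ⊆ supp(p) and sup_{n∈supp(p)} q(n)/p(n) < ∞}; (2) the relative algebraic interior of this face is ri(F_{Δ_ℕ}(p)) = {q ∈ F_{Δ_ℕ}(p) : inf_{n∈supp(p)} q(n)/p(n) > 0}. -/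
variable {V : Type*} [AddCommGroup V] [Module ℝ V]

/-- The set of probability densities on `ℕ`. -/
def probDensities : Set (ℕ → ℝ) :=
  {p | (∀ n, 0 ≤ p n) ∧ Summable p ∧ ∑' n, p n = 1}

theorem mem_pd_iff (q : ℕ → ℝ) : q ∈ probDensities ↔ (∀ n, 0 ≤ q n) ∧ HasSum q 1 := by
  constructor
  · rintro ⟨h, hs, ht⟩
    exact ⟨h, ht ▸ hs.hasSum⟩
  · rintro ⟨h, hs⟩
    exact ⟨h, hs.summable, hs.tsum_eq⟩

theorem bound_iff (p q : ℕ → ℝ) (hp : ∀ n, 0 ≤ p n) (hq : ∀ n, 0 ≤ q n) :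
    ((∀ n, 0 < q n → 0 < p n) ∧ ∃ M : ℝ, ∀ n, 0 < p n → q n / p n ≤ M) ↔
      ∃ M : ℝ, 1 < M ∧ ∀ n, q n ≤ M * p n := by
  constructor
  · rintro ⟨h, M, hM⟩
    refine ⟨max M 2, lt_of_lt_of_le (by norm_num) (le_max_right _ _), fun n => ?_⟩
    rcases (hp n).lt_or_eq with h0 | h0
    · exact (div_le_iff₀ h0).1 ((hM n h0).trans (le_max_left _ _))
    · have : ¬ 0 < q n := fun hh => absurd (h n hh) (by rw [← h0]; exact lt_irrefl _)
      rw [← h0, mul_zero]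
      exact not_lt.1 this
  · rintro ⟨M, h1, hM⟩
    refine ⟨fun n hn => ?_, M, fun n hn => (div_le_iff₀ hn).2 (hM n)⟩
    by_contra hc
    have h0 : p n = 0 := le_antisymm (not_lt.1 hc) (hp n)
    have := hM n
    rw [h0] at this
    linarith

theorem hasSum_comb {y z : ℕ → ℝ} {a b s t : ℝ} (hy : HasSum y s) (hz : HasSum z t) :
    HasSum (fun n => a * y n + b * z n) (a * s + b * t) :=
  (hy.mul_left a).add (hz.mul_left b)

/-- The explicit description of the face. -/
def gSet (p : ℕ → ℝ) : Set (ℕ → ℝ) :=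
  {q | ((∀ n, 0 ≤ q n) ∧ HasSum q 1) ∧ ∃ M : ℝ, 1 < M ∧ ∀ n, q n ≤ M * p n}

theorem gSet_face (p : ℕ → ℝ) (hp0 : ∀ n, 0 ≤ p n) : IsFaceOf probDensities (gSet p) := by
  refine ⟨?_, ?_, ?_⟩
  · rintro x ⟨⟨hx0, hx1⟩, M, hM1, hM⟩ y ⟨⟨hy0, hy1⟩, N, hN1, hN⟩ a b ha hb hab
    refine ⟨⟨fun n => ?_, ?_⟩, M + N, by linarith, fun n => ?_⟩
    · have := mul_nonneg ha (hx0 n)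
      have := mul_nonneg hb (hy0 n)
      simp only [Pi.add_apply, Pi.smul_apply, smul_eq_mul]
      linarith
    · have := hasSum_comb (a := a) (b := b) hx1 hy1
      rw [mul_one, mul_one, hab] at this
      exact this
    · simp only [Pi.add_apply, Pi.smul_apply, smul_eq_mul]
      have h1 : a * x n ≤ 1 * x n := mul_le_mul_of_nonneg_right (by linarith) (hx0 n)
      have h2 : b * y n ≤ 1 * y n := mul_le_mul_of_nonneg_right (by linarith) (hy0 n)
      have := hM n
      have := hN n
      linarith
  · rintro x ⟨hx, -⟩
    exact (mem_pd_iff x).2 hx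
  · rintro x ⟨⟨hx0, hx1⟩, M, hM1, hM⟩ y hy z hz l ⟨hl0, hl1⟩ rfl
    rw [mem_pd_iff] at hy hz
    simp only [Pi.add_apply, Pi.smul_apply, smul_eq_mul] at hM
    have hl2 : 0 < 1 - l := by linarith
    refine ⟨⟨hy, M / (1 - l), ?_, fun n => ?_⟩, ⟨hz, M / l, ?_, fun n => ?_⟩⟩
    · rw [lt_div_iff₀ hl2]; linarith
    · rw [div_mul_eq_mul_div, le_div_iff₀ hl2]
      have := hM n
      have := mul_nonneg hl0.le (hz.1 n)
      linarith
    · rw [lt_div_iff₀ hl0]; linarith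
    · rw [div_mul_eq_mul_div, le_div_iff₀ hl0]
      have := hM n
      have := mul_nonneg hl2.le (hy.1 n)
      linarith

theorem genFace_eq_s18 (p : ℕ → ℝ) (hp : p ∈ probDensities) :
    genFace probDensities p = gSet p := by
  have hp' := (mem_pd_iff p).1 hp
  apply Set.Subset.antisymm
  · apply Set.sInter_subset_of_mem
    refine ⟨gSet_face p hp'.1, hp', 2, by norm_num, fun n => ?_⟩
    have := hp'.1 n
    linarith
  · rintro q ⟨hq, M, hM1, hM⟩ F ⟨⟨-, -, hF⟩, hpF⟩
    have hM0 : 0 < M := by linarith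
    have hM2 : 0 < M - 1 := by linarith
    refine (hF p hpF (fun n => M / (M - 1) * p n + (- (1 / (M - 1))) * q n) ?_ q
      ((mem_pd_iff q).2 hq) (1 / M) ⟨by positivity, ?_⟩ ?_).2
    · rw [mem_pd_iff]
      refine ⟨fun n => ?_, ?_⟩
      · have : M / (M - 1) * p n + (- (1 / (M - 1))) * q n = (M * p n - q n) / (M - 1) := by
          field_simp
          ring
        rw [this]
        exact div_nonneg (by linarith [hM n]) hM2.le
      · have := hasSum_comb (a := M / (M - 1)) (b := - (1 / (M - 1))) hp'.2 hq.2
        convert this using 1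
        field_simp
        ring
    · rw [div_lt_one hM0]; exact hM1
    · funext n
      simp only [Pi.add_apply, Pi.smul_apply, smul_eq_mul]
      field_simp
      ring

theorem span_gSet (p : ℕ → ℝ) {y : ℕ → ℝ} (hy : y ∈ affineSpan ℝ (gSet p)) :
    HasSum y 1 ∧ ∃ M : ℝ, 0 < M ∧ ∀ n, |y n| ≤ M * p n := by
  refine affineSpan_induction (p := fun y : ℕ → ℝ => HasSum y 1 ∧ ∃ M : ℝ, 0 < M ∧ ∀ n, |y n| ≤ M * p n) hy ?_ ?_
  · rintro x ⟨⟨hx0, hx1⟩, M, hM1, hM⟩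
    exact ⟨hx1, M, by linarith, fun n => by rw [abs_of_nonneg (hx0 n)]; exact hM n⟩
  · rintro c u v w ⟨hu, A, hA0, hA⟩ ⟨hv, B, hB0, hB⟩ ⟨hw, C, hC0, hC⟩
    refine ⟨?_, |c| * (A + B) + C, by positivity, fun n => ?_⟩
    · have := ((hu.sub hv).mul_left c).add hw
      simp only [sub_self, mul_zero, zero_add] at this
      exact this
    · have h1 : (c • (u -ᵥ v) +ᵥ w) n = c * (u n - v n) + w n := rfl
      rw [h1]
      have h2 := abs_add_le (c * (u n - v n)) (w n)
      rw [abs_mul] at h2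
      have h3 := abs_sub (u n) (v n)
      have h4 : |c| * |u n - v n| ≤ |c| * (A * p n + B * p n) :=
        mul_le_mul_of_nonneg_left (by linarith [hA n, hB n]) (abs_nonneg c)
      have := hC n
      linarith

theorem ri_gSet (p : ℕ → ℝ) (hp : p ∈ probDensities) :
    riSet (gSet p) = {q ∈ gSet p | ∃ c : ℝ, 0 < c ∧ ∀ n, 0 < p n → c ≤ q n / p n} := by
  have hp' := (mem_pd_iff p).1 hp
  have hpG : p ∈ gSet p := by
    refine ⟨hp', 2, by norm_num, fun n => ?_⟩
    have := hp'.1 n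
    linarith
  ext q
  constructor
  · rintro ⟨hq, h⟩
    refine ⟨hq, ?_⟩
    obtain ⟨e, he, -, h2⟩ := h p (subset_affineSpan ℝ _ hpG)
    refine ⟨e / (1 + e), by positivity, fun n hn => ?_⟩
    have := h2.1.1 n
    simp only [Pi.sub_apply, Pi.smul_apply, smul_eq_mul] at this
    rw [div_le_div_iff₀ (by positivity) hn]
    linarith
  · rintro ⟨hq, c, hc, hcq⟩
    refine ⟨hq, fun y hy => ?_⟩
    obtain ⟨hy1, N, hN0, hN⟩ := span_gSet p hy
    obtain ⟨⟨hq0, hq1⟩, M, hM1, hM⟩ := hq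
    have hcp : ∀ n, c * p n ≤ q n := fun n => by
      rcases (hp'.1 n).lt_or_eq with h0 | h0
      · exact (le_div_iff₀ h0).1 (hcq n h0)
      · rw [← h0, mul_zero]; exact hq0 n
    have hK : 0 < M + N := by linarith
    have key : ∀ n, |c / (M + N) * (y n - q n)| ≤ c * p n := fun n => by
      rw [abs_mul, abs_of_pos (by positivity)]
      have h3 := abs_sub (y n) (q n)
      rw [abs_of_nonneg (hq0 n)] at h3
      calc c / (M + N) * |y n - q n| ≤ c / (M + N) * ((M + N) * p n) :=
            mul_le_mul_of_nonneg_left (by linarith [hN n, hM n]) (by positivity)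
        _ = c * p n := by field_simp
    have hs := (hy1.sub hq1).mul_left (c / (M + N))
    rw [sub_self, mul_zero] at hs
    refine ⟨c / (M + N), by positivity, ⟨⟨fun n => ?_, ?_⟩, M + c, by linarith, fun n => ?_⟩,
      ⟨⟨fun n => ?_, ?_⟩, M + c, by linarith, fun n => ?_⟩⟩
    · have := abs_le.1 (key n)
      simp only [Pi.add_apply, Pi.sub_apply, Pi.smul_apply, smul_eq_mul]
      linarith [hcp n]
    · have := hq1.add hs
      rw [add_zero] at this
      exact this
    · have := abs_le.1 (key n)
      simp only [Pi.add_apply, Pi.sub_apply, Pi.smul_apply, smul_eq_mul]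
      linarith [hM n]
    · have := abs_le.1 (key n)
      simp only [Pi.sub_apply, Pi.smul_apply, smul_eq_mul]
      linarith [hcp n]
    · have := hq1.sub hs
      rw [sub_zero] at this
      exact this
    · have := abs_le.1 (key n)
      simp only [Pi.sub_apply, Pi.smul_apply, smul_eq_mul]
      linarith [hM n]

theorem stmt18 (p : ℕ → ℝ) (hp : p ∈ probDensities) :
    genFace probDensities p =
      {q ∈ probDensities | (∀ n, 0 < q n → 0 < p n) ∧
        ∃ M : ℝ, ∀ n, 0 < p n → q n / p n ≤ M} ∧
    riSet (genFace probDensities p) =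
      {q ∈ genFace probDensities p | ∃ c : ℝ, 0 < c ∧ ∀ n, 0 < p n → c ≤ q n / p n} := by
  rw [genFace_eq_s18 p hp]
  refine ⟨?_, ri_gSet p hp⟩
  have hp' := (mem_pd_iff p).1 hp
  ext q
  constructor
  · rintro ⟨hq, hM⟩
    exact ⟨(mem_pd_iff q).2 hq, (bound_iff p q hp'.1 hq.1).2 hM⟩
  · rintro ⟨hq, hM⟩
    have hq' := (mem_pd_iff q).1 hq
    exact ⟨hq', (bound_iff p q hp'.1 hq'.1).1 hM⟩
end
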